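/- Suppose 0 < 1/n ≪ ε ≪ 1/t, 1/a_1 ≪ γ, 1/k, 1/ℓ with 2 ≤ k ≤ ℓ. Suppose F is an ℓ-vertex k-graph and a ∈ [t]^{k−1}. Suppose H is an n-vertex k-graph satisfying a regularity instance R = (ε, a, d_{a,k}). Then Pr(F, H) = IC(F, d_{a,k}) ± γ. -/

import Mathlib

namespace HypReg

open Finset

attribute [local instance 10] Classical.propDecidable

noncomputable section

variable {V : Type*} [DecidableEq V]

/-- Representation of a 1-graph: the set of singletons of `U`. -/
def sing (U : Finset V) : Finset (Finset V) :=
  U.image fun v => ({v} : Finset V)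

/-- `Kset W j i B`: the i-element subsets of `W` all of whose j-element subsets lie in `B`. -/
def Kset (W : Finset V) (j i : ℕ) (B : Finset (Finset V)) : Finset (Finset V) :=
  (W.powersetCard i).filter fun S => ∀ T ∈ S.powersetCard j, T ∈ B

/-- Clique operator which, at level 1, uses the ambient family `cr` of crossing i-sets. -/
def KsetC (W : Finset V) (cr : Finset (Finset V)) (j i : ℕ) (B : Finset (Finset V)) :
    Finset (Finset V) :=
  if j = 1 then cr.filter fun S => ∀ v ∈ S, ({v} : Finset V) ∈ B
  else Kset W j i B

/-- `A` (a (j+1)-graph) is (ε,d)-regular with respect to the j-graph `B` (plain clique sets). -/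
def RegPair (W : Finset V) (j : ℕ) (ε d : ℝ) (A B : Finset (Finset V)) : Prop :=
  ∀ Q ⊆ B, ε * ((Kset W j (j+1) B).card : ℝ) ≤ ((Kset W j (j+1) Q).card : ℝ) →
    |((A ∩ Kset W j (j+1) Q).card : ℝ) - d * ((Kset W j (j+1) Q).card : ℝ)|
      ≤ ε * ((Kset W j (j+1) Q).card : ℝ)

/-- (ε,d)-regularity with crossing-aware clique sets. -/
def RegPairC (W : Finset V) (cr : Finset (Finset V)) (j : ℕ) (ε d : ℝ)
    (A B : Finset (Finset V)) : Prop :=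
  ∀ Q ⊆ B, ε * ((KsetC W cr j (j+1) B).card : ℝ) ≤ ((KsetC W cr j (j+1) Q).card : ℝ) →
    |((A ∩ KsetC W cr j (j+1) Q).card : ℝ) - d * ((KsetC W cr j (j+1) Q).card : ℝ)|
      ≤ ε * ((KsetC W cr j (j+1) Q).card : ℝ)

/-- Relative density `d(A | B)` of the (j+1)-graph `A` w.r.t. the j-graph `B`. -/
def dens (W : Finset V) (cr : Finset (Finset V)) (j : ℕ) (A B : Finset (Finset V)) : ℝ :=
  if (KsetC W cr j (j+1) B).card = 0 then 0
  else ((A ∩ KsetC W cr j (j+1) B).card : ℝ) / ((KsetC W cr j (j+1) B).card : ℝ)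

/-- `H` is a k-graph on the vertex set `W`. -/
def IsKGraph (W : Finset V) (k : ℕ) (H : Finset (Finset V)) : Prop :=
  ∀ e ∈ H, e ⊆ W ∧ e.card = k

/-- symmetric difference of two hypergraphs -/
def sd (A B : Finset (Finset V)) : Finset (Finset V) := (A \ B) ∪ (B \ A)

/-- A (candidate) family of partitions: the ground set, the class of each vertex and,
for each level `j ≥ 2`, the class of each crossing j-set. -/
structure PartFam (V : Type*) [DecidableEq V] where
  gnd : Finset V
  vClass : V → Finset V
  cls : ℕ → Finset V → Finset (Finset V)

namespace PartFam

variable (F : PartFam V)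

/-- crossing i-sets -/
def cross (i : ℕ) : Finset (Finset V) :=
  (F.gnd.powersetCard i).filter fun S =>
    ∀ u ∈ S, ∀ v ∈ S, u ≠ v → F.vClass u ≠ F.vClass v

/-- the level-j polyad of a vertex set `J` -/
def polyad (j : ℕ) (J : Finset V) : Finset (Finset V) :=
  if j = 1 then sing (J.sup F.vClass) else (J.powersetCard j).sup (F.cls j)

/-- the clique set `K_j(P̂^{(j-1)}(J))` of the (j−1)-polyad of a crossing j-set `J` -/
def polyCliques (j : ℕ) (J : Finset V) : Finset (Finset V) :=
  KsetC F.gnd (F.cross j) (j-1) j (F.polyad (j-1) J)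

/-- `F` is a family of partitions `P(k−1, a)`. -/
def IsFamily (k : ℕ) (a : ℕ → ℕ) : Prop :=
  (∀ v ∈ F.gnd, v ∈ F.vClass v) ∧
  (∀ v ∈ F.gnd, F.vClass v ⊆ F.gnd) ∧
  (∀ u ∈ F.gnd, ∀ v ∈ F.gnd, u ∈ F.vClass v → F.vClass u = F.vClass v) ∧
  (F.gnd.image F.vClass).card = a 1 ∧ k ≤ a 1 ∧
  ∀ j, 2 ≤ j → j ≤ k - 1 →
    (∀ J ∈ F.cross j, J ∈ F.cls j J) ∧
    (∀ J ∈ F.cross j, ∀ I ∈ F.cls j J, F.cls j I = F.cls j J) ∧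
    (∀ J ∈ F.cross j, F.cls j J ⊆ F.polyCliques j J) ∧
    (∀ J ∈ F.cross j, F.polyCliques j J ⊆ F.cross j) ∧
    (∀ J ∈ F.cross j, ((F.polyCliques j J).image (F.cls j)).card = a j)

/-- the regularity condition in the definition of an equitable family of partitions:
all polyad complexes of crossing k-sets are (ε, (1/a_2, …, 1/a_{k−1}))-regular. -/
def PolyadReg (k : ℕ) (a : ℕ → ℕ) (ε : ℝ) : Prop :=
  ∀ K ∈ F.cross k, ∀ j, 2 ≤ j → j ≤ k - 1 → ∀ J ∈ K.powersetCard j,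
    RegPairC F.gnd (F.cross j) (j-1) ε (1 / (a j : ℝ)) (F.polyad j K) (F.polyad (j-1) J)

/-- `(η, ε, a, λ)`-equitable family of partitions -/
def IsEquitable (k : ℕ) (a : ℕ → ℕ) (η ε lam : ℝ) : Prop :=
  1 ≤ η * (a 1 : ℝ) ∧
  (∀ v ∈ F.gnd, |((F.vClass v).card : ℝ) - (F.gnd.card : ℝ) / (a 1 : ℝ)|
      ≤ lam * (F.gnd.card : ℝ) / (a 1 : ℝ)) ∧
  F.PolyadReg k a ε

/-- `(η, ε, a)`-equitable family of partitions (classes of size ⌊n/a₁⌋ or ⌊n/a₁⌋+1) -/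
def IsEquitableE (k : ℕ) (a : ℕ → ℕ) (η ε : ℝ) : Prop :=
  1 ≤ η * (a 1 : ℝ) ∧
  (∀ v ∈ F.gnd, (F.vClass v).card = F.gnd.card / a 1 ∨
      (F.vClass v).card = F.gnd.card / a 1 + 1) ∧
  F.PolyadReg k a ε

/-- `G` is perfectly ε-regular with respect to `F`. -/
def PerfectlyRegular (k : ℕ) (ε : ℝ) (G : Finset (Finset V)) : Prop :=
  ∀ K ∈ F.cross k, ∃ d : ℝ, 0 ≤ d ∧
    RegPairC F.gnd (F.cross k) (k-1) ε d G (F.polyad (k-1) K)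

end PartFam

/-- `a` is a T-bounded vector of length k−1. -/
def BoundedVec (k T : ℕ) (a : ℕ → ℕ) : Prop := ∀ j, 1 ≤ j → j ≤ k - 1 → a j ≤ T

/-- level-j refinement `F^{(j)} ≺ P^{(j)}` between two families of partitions -/
def RefinesAt (F P : PartFam V) (j : ℕ) : Prop :=
  if j = 1 then ∀ v ∈ F.gnd, F.vClass v ⊆ P.vClass v
  else ∀ I ∈ F.cross j,
    (∃ J ∈ P.cross j, F.cls j I ⊆ P.cls j J) ∨ ∀ S ∈ F.cls j I, S ∉ P.cross j

/-- level-j approximate refinement `F^{(j)} ≺_ν P^{(j)}` -/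
def RefinesApproxAt (F P : PartFam V) (j : ℕ) (ν : ℝ) : Prop :=
  if j = 1 then
    ∃ f : Finset V → Finset V,
      (∀ v ∈ F.gnd, f (F.vClass v) ∈ F.gnd.image P.vClass) ∧
      ∑ C ∈ F.gnd.image F.vClass, ((C \ f C).card : ℝ) ≤ ν * (F.gnd.card : ℝ)
  else
    ∃ f : Finset (Finset V) → Finset (Finset V),
      (∀ I ∈ F.cross j,
        f (F.cls j I) ∈ ((P.cross j).image (P.cls j)) ∪ {F.cross j \ P.cross j}) ∧
      ∑ C ∈ (F.cross j).image (F.cls j), ((C \ f C).card : ℝ) ≤ ν * ((F.cross j).card : ℝ)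

/-- The address space: a base set (of class indices) together with a labelling of its subsets. -/
abbrev Addr := Finset ℕ × (Finset ℕ → ℕ)

/-- `x` is an element of the address space `Â(l, j, a)`. -/
def IsAddress (l j : ℕ) (a : ℕ → ℕ) (x : Addr) : Prop :=
  x.1.card = l ∧ (∀ i ∈ x.1, 1 ≤ i ∧ i ≤ a 1) ∧
  (∀ L : Finset ℕ, L ⊆ x.1 → 2 ≤ L.card → L.card ≤ j → 1 ≤ x.2 L ∧ x.2 L ≤ a L.card) ∧
  (∀ L : Finset ℕ, ¬(L ⊆ x.1 ∧ 2 ≤ L.card ∧ L.card ≤ j) → x.2 L = 0)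

/-- restriction `ŷ ≤ x̂` of an address to the base `B`, keeping levels up to `j`. -/
def restrictA (x : Addr) (j : ℕ) (B : Finset ℕ) : Addr :=
  (B, fun L => if L ⊆ B ∧ 2 ≤ L.card ∧ L.card ≤ j then x.2 L else 0)

/-- `d` is a density function of `Â(k, k−1, a)`. -/
def DensityFun (k : ℕ) (a : ℕ → ℕ) (d : Addr → ℝ) : Prop :=
  ∀ x : Addr, IsAddress k (k-1) a x → 0 ≤ d x ∧ d x ≤ 1

/-- A family of partitions together with an `a`-labelling. -/
structure LabFam (V : Type*) [DecidableEq V] extends PartFam V where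
  vIdx : V → ℕ
  lbl : ℕ → Finset V → ℕ

namespace LabFam

variable (F : LabFam V)

/-- `F` is a family of partitions with a legitimate `a`-labelling. -/
def IsLabeled (k : ℕ) (a : ℕ → ℕ) : Prop :=
  F.toPartFam.IsFamily k a ∧
  (∀ v ∈ F.gnd, 1 ≤ F.vIdx v ∧ F.vIdx v ≤ a 1) ∧
  (∀ u ∈ F.gnd, ∀ v ∈ F.gnd, (F.vIdx u = F.vIdx v ↔ F.vClass u = F.vClass v)) ∧
  ∀ j, 2 ≤ j → j ≤ k - 1 →
    (∀ I ∈ F.toPartFam.cross j, 1 ≤ F.lbl j I ∧ F.lbl j I ≤ a j) ∧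
    (∀ I ∈ F.toPartFam.cross j, ∀ I' ∈ F.cls j I, F.lbl j I' = F.lbl j I) ∧
    (∀ I ∈ F.toPartFam.cross j, ∀ I' ∈ F.toPartFam.cross j,
      F.toPartFam.polyad (j-1) I = F.toPartFam.polyad (j-1) I' →
      F.lbl j I = F.lbl j I' → F.cls j I = F.cls j I')

/-- the address `x̂(L)` (up to level j) of a crossing set `L` -/
def addrOf (j : ℕ) (L : Finset V) : Addr :=
  (L.image F.vIdx,
   fun M => if M ⊆ L.image F.vIdx ∧ 2 ≤ M.card ∧ M.card ≤ j
     then F.lbl M.card (L.filter fun v => F.vIdx v ∈ M) else 0)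

/-- the part `P^{(j)}(x̂, b)` -/
def partAt (j : ℕ) (x : Addr) (b : ℕ) : Finset (Finset V) :=
  if j ≤ 1 then (if x.1 = {b} then sing (F.gnd.filter fun v => F.vIdx v = b) else ∅)
  else (F.toPartFam.cross j).filter fun I => F.addrOf (j-1) I = x ∧ F.lbl j I = b

/-- the polyad `P̂^{(j)}(x̂)` -/
def polyAt (j : ℕ) (x : Addr) : Finset (Finset V) :=
  if j = 1 then sing (F.gnd.filter fun v => F.vIdx v ∈ x.1)
  else (x.1.powersetCard j).sup fun B => F.partAt j (restrictA x (j-1) B) (x.2 B)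

/-- `F` is an `(ε, d)`-partition of `H`. -/
def IsDensPartition (k : ℕ) (a : ℕ → ℕ) (ε : ℝ) (d : Addr → ℝ)
    (H : Finset (Finset V)) : Prop :=
  ∀ x : Addr, IsAddress k (k-1) a x →
    RegPairC F.gnd (F.toPartFam.cross k) (k-1) ε (d x) H (F.polyAt (k-1) x)

/-- `F` is an `(ε, a, d)`-equitable partition of `H`. -/
def IsEquitPartition (k : ℕ) (a : ℕ → ℕ) (ε : ℝ) (d : Addr → ℝ)
    (H : Finset (Finset V)) : Prop :=
  F.IsLabeled k a ∧ F.toPartFam.IsEquitableE k a (1 / (a 1 : ℝ)) ε ∧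
  F.IsDensPartition k a ε d H

end LabFam

/-- An ℓ-partite complex: vertex classes and, for each level, a partite graph. -/
structure Cx (V : Type*) [DecidableEq V] (l : ℕ) where
  C : Fin l → Finset V
  G : ℕ → Finset (Finset V)

namespace Cx

variable {l : ℕ} (X : Cx V l)

def gnd : Finset V := Finset.univ.sup X.C

/-- crossing i-sets with respect to the classes of `X` -/
def cross (i : ℕ) : Finset (Finset V) :=
  (X.gnd.powersetCard i).filter fun S => ∀ t : Fin l, (S ∩ X.C t).card ≤ 1

/-- restriction of the level-j graph to the classes indexed by `L` -/
def restr (j : ℕ) (L : Finset (Fin l)) : Finset (Finset V) :=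
  if j = 1 then sing (L.sup X.C) else (X.G j).filter fun e => e ⊆ L.sup X.C

/-- `X` is a complex with levels up to `k`. -/
def IsComplex (k : ℕ) : Prop :=
  (∀ s t : Fin l, s ≠ t → Disjoint (X.C s) (X.C t)) ∧
  (∀ j, 2 ≤ j → j ≤ k → X.G j ⊆ X.cross j) ∧
  (∀ j, 3 ≤ j → j ≤ k → X.G j ⊆ Kset X.gnd (j-1) j (X.G (j-1)))

/-- `X` is an (ε, (d_2, …, d_k))-regular complex. -/
def IsRegular (k : ℕ) (ε : ℝ) (d : ℕ → ℝ) : Prop :=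
  ∀ j, 2 ≤ j → j ≤ k → ∀ L ∈ (Finset.univ : Finset (Fin l)).powersetCard j,
    RegPairC X.gnd (X.cross j) (j-1) ε (d j) (X.G j) (X.restr (j-1) L)

/-- The restricted complex `X[L]` is (ε, (d_2, …, d_{k−1}, p))-regular. -/
def RestrRegular (k : ℕ) (ε : ℝ) (d : ℕ → ℝ) (L : Finset (Fin l)) (p : ℝ) : Prop :=
  ∀ j, 2 ≤ j → j ≤ k → ∀ L' ∈ L.powersetCard j,
    RegPairC X.gnd (X.cross j) (j-1) ε (if j = k then p else d j)
      (X.restr j L) (X.restr (j-1) L')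

/-- clique set `K_i` of the level-j graph of the complex (level 1: crossing sets). -/
def KsetLvl (j i : ℕ) : Finset (Finset V) :=
  if j ≤ 1 then X.cross i else Kset X.gnd j i (X.G j)

end Cx

/-- `eCL`, `mCL` satisfy the counting lemma of Kohayakawa–Rödl–Skokan. -/
def CountingProp (eCL : ℝ → ℝ → ℕ → ℕ → ℝ) (mCL : ℝ → ℝ → ℕ → ℕ → ℕ) : Prop :=
  ∀ γ d₀ : ℝ, 0 < γ → 0 < d₀ → ∀ k l : ℕ, 2 ≤ k → k ≤ l →
    (0 < eCL γ d₀ k l ∧ eCL γ d₀ k l ≤ 1) ∧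
    ∀ (V₀ : Type) [DecidableEq V₀], ∀ (X : Cx V₀ l) (m : ℕ) (lam ε : ℝ) (d : ℕ → ℝ),
      0 ≤ lam → lam < 1/4 → 0 < ε → ε ≤ eCL γ d₀ k l → mCL γ d₀ k l ≤ m →
      (∀ j, 2 ≤ j → j ≤ k → d₀ ≤ d j) →
      X.IsComplex k →
      (∀ i, |((X.C i).card : ℝ) - (m : ℝ)| ≤ lam * m) →
      X.IsRegular k ε d →
      |((Kset X.gnd k l (X.G k)).card : ℝ) -
        (∏ j ∈ Finset.Icc 2 k, d j ^ (l.choose j)) * ∏ i, ((X.C i).card : ℝ)|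
        ≤ γ * ((∏ j ∈ Finset.Icc 2 k, d j ^ (l.choose j)) * ∏ i, ((X.C i).card : ℝ))

/-- `eRI` is a legitimate function for defining regularity instances. -/
def GoodERI (eRI : ℕ → ℕ → ℝ) : Prop :=
  (∀ t k : ℕ, 1 ≤ t → 2 ≤ k → 0 < eRI t k ∧ eRI t k ≤ 1) ∧
  (∀ k t t' : ℕ, 1 ≤ t → t ≤ t' → eRI t' k ≤ eRI t k) ∧
  (∀ t k k' : ℕ, 2 ≤ k → k ≤ k' → eRI t k' ≤ eRI t k) ∧
  (∀ k : ℕ, Filter.Tendsto (fun t => eRI t k) Filter.atTop (nhds 0)) ∧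
  ∃ (eCL : ℝ → ℝ → ℕ → ℕ → ℝ) (mCL : ℝ → ℝ → ℕ → ℕ → ℕ),
    CountingProp eCL mCL ∧
    ∀ t k : ℕ, 1 ≤ t → 2 ≤ k →
      eRI t k < eCL (1/(t:ℝ)) (1/(t:ℝ)) (k-1) k / (4 * (t:ℝ) ^ (4^k))

/-- `max_i a_i` over `i ∈ [k−1]` -/
def maxA (k : ℕ) (a : ℕ → ℕ) : ℕ := (Finset.Icc 1 (k-1)).sup a

/-- `(ε, a, d)` is a regularity instance. -/
def RegInstance (eRI : ℕ → ℕ → ℝ) (k : ℕ) (ε : ℝ) (a : ℕ → ℕ) (d : Addr → ℝ) : Prop :=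
  2 ≤ k ∧ (∀ j, 1 ≤ j → j ≤ k - 1 → 1 ≤ a j) ∧ 0 < ε ∧
  ε ≤ eRI (maxA k a) k ∧ DensityFun k a d

section Counting

variable {W : Type} [Fintype W] [DecidableEq W]

/-- `S` spans an induced copy of `Fg` in `H` (both k-graphs). -/
def InducedCopy (Fg : Finset (Finset W)) (H : Finset (Finset V)) (k : ℕ) (S : Finset V) :
    Prop :=
  ∃ e : W → V, Function.Injective e ∧ Finset.univ.image e = S ∧
    ∀ A : Finset W, A.card = k → (A.image e ∈ H ↔ A ∈ Fg)

/-- the size of the automorphism group of `Fg` -/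
def AutCount (Fg : Finset (Finset W)) : ℕ :=
  Nat.card {π : W ≃ W // ∀ A : Finset W, A.image π ∈ Fg ↔ A ∈ Fg}

/-- the number `IC_σ(F, H)` of σ-induced copies of `Fg` in the complex `X` -/
def ICosig {l : ℕ} (X : Cx V l) (k : ℕ) (Fg : Finset (Finset W)) (σ : W ≃ Fin l) : ℕ :=
  Set.ncard {e : W → V |
    (∀ v, e v ∈ X.C (σ v)) ∧
    Finset.univ.image e ∈ X.KsetLvl (k-1) l ∧
    ∀ A : Finset W, A.card = k → (A.image e ∈ X.G k ↔ A ∈ Fg)}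

/-- `IC(F, d, x̂, σ)` -/
def ICs (Fg : Finset (Finset W)) (k l : ℕ) (a : ℕ → ℕ) (d : Addr → ℝ)
    (x : Addr) (σ : W → ℕ) : ℝ :=
  (∏ B ∈ x.1.powersetCard k,
    if ∃ A ∈ Fg, A.image σ = B then d (restrictA x (k-1) B)
    else 1 - d (restrictA x (k-1) B)) *
  ∏ j ∈ Finset.Icc 2 (k-1), ((a j : ℝ) ^ (l.choose j))⁻¹

/-- `IC(F, d, x̂)` -/
def ICa (Fg : Finset (Finset W)) (k l : ℕ) (a : ℕ → ℕ) (d : Addr → ℝ) (x : Addr) : ℝ :=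
  (AutCount Fg : ℝ)⁻¹ *
    ∑ᶠ σ ∈ {σ : W → ℕ | Set.BijOn σ Set.univ ↑x.1}, ICs Fg k l a d x σ

/-- `IC(F, d)` -/
def IC (Fg : Finset (Finset W)) (k l : ℕ) (a : ℕ → ℕ) (d : Addr → ℝ) : ℝ :=
  (((a 1).choose l : ℝ))⁻¹ * ∑ᶠ x ∈ {x : Addr | IsAddress l (k-1) a x}, ICa Fg k l a d x

end Counting

end

end HypReg
namespace HypReg

open Finset

attribute [local instance 10] Classical.propDecidable

/-!
Injections `e : W → V` inducing a copy of `Fg` are sorted by the address `x` of their image and the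
class indices `σ = F.vIdx ∘ e`; those meeting some vertex class twice are negligible because `a 1`
is large. For fixed `(x, σ)`, start from all maps respecting the vertex classes and impose the
prescribed label (or edge status) of the image of each index set `J` in order of increasing `#J`.
On a fibre of maps that are fixed off `J`, the conditions imposed so far see only proper subsets of
`J`, so the images of `J` form the full clique set of a subset of a polyad; regularity, in the form
that also covers small clique sets, then shows that the next condition holds with its predicted
density up to an additive error `ε * n ^ l`. The product of these densities is `ICs`. As `ε` may
depend on `t`, these additive errors can be summed over all pairs `(x, σ)`, and no counting lemma
for sparse complexes is needed.
-/

section Finset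

variable {α β γ : Type*} [DecidableEq β] [DecidableEq γ]

lemma card_image_le_card_image_of_eq_imp {s : Finset α} {f : α → β} {g : α → γ}
    (h : ∀ x ∈ s, ∀ y ∈ s, g x = g y → f x = f y) : #(s.image f) ≤ #(s.image g) := by
  refine card_le_card_of_forall_subsingleton (fun b c => ∃ x ∈ s, f x = b ∧ g x = c) ?_ ?_
  · intro b hb
    obtain ⟨x, hx, rfl⟩ := mem_image.1 hb
    exact ⟨g x, mem_image_of_mem g hx, x, hx, rfl, rfl⟩
  · rintro c - b ⟨-, x, hx, rfl, rfl⟩ b' ⟨-, y, hy, rfl, hyx⟩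
    exact h x hx y hy hyx.symm

lemma exists_eq_of_card_image_eq {s : Finset α} {f : α → β} {g : α → ℕ} {m : ℕ}
    (hcard : #(s.image f) = m) (hg : ∀ x ∈ s, 1 ≤ g x ∧ g x ≤ m)
    (h : ∀ x ∈ s, ∀ y ∈ s, g x = g y → f x = f y) {b : ℕ} (hb : 1 ≤ b) (hbm : b ≤ m) :
    ∃ x ∈ s, g x = b := by
  have himage : s.image g = Icc 1 m := by
    refine eq_of_subset_of_card_le (image_subset_iff.2 fun x hx => mem_Icc.2 (hg x hx)) ?_
    simpa [hcard] using card_image_le_card_image_of_eq_imp h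
  exact mem_image.1 (himage ▸ mem_Icc.2 ⟨hb, hbm⟩)

lemma filter_mem_image_of_injOn {s t : Finset α} {f : α → β} (hf : Set.InjOn f t) (hst : s ⊆ t) :
    {x ∈ t | f x ∈ s.image f} = s := by
  ext x
  rw [mem_filter]
  refine ⟨fun ⟨hx, hfx⟩ => ?_, fun hx => ⟨hst hx, mem_image_of_mem f hx⟩⟩
  obtain ⟨y, hy, hyx⟩ := mem_image.1 hfx
  rwa [← hf (hst hy) hx hyx]

lemma subset_of_image_subset_image {s s' t : Finset α} {f : α → β} (hf : Set.InjOn f t)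
    (hs : s ⊆ t) (hs' : s' ⊆ t) (h : s.image f ⊆ s'.image f) : s ⊆ s' := fun x hx => by
  obtain ⟨y, hy, hyx⟩ := mem_image.1 (h (mem_image_of_mem f hx))
  rwa [← hf (hs' hy) (hs hx) hyx]

end Finset

section Addresses

lemma isAddress_restrictA {k l j : ℕ} {a : ℕ → ℕ} {x : Addr} (hx : IsAddress l j a x)
    {B : Finset ℕ} (hB : B ⊆ x.1) (hBc : #B = k) : IsAddress k j a (restrictA x j B) := by
  refine ⟨hBc, fun i hi => hx.2.1 i (hB hi), fun L hL h2 hLj => ?_, fun L hL => if_neg hL⟩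
  have := hx.2.2.1 L (hL.trans hB) h2 hLj
  simp only [restrictA]
  rwa [if_pos ⟨hL, h2, hLj⟩]

lemma restrictA_restrictA (x : Addr) {i j : ℕ} (hij : i ≤ j) {B C : Finset ℕ} (hBC : B ⊆ C) :
    restrictA (restrictA x j C) i B = restrictA x i B := by
  refine Prod.ext rfl (funext fun L => ?_)
  by_cases hL : L ⊆ B ∧ 2 ≤ #L ∧ #L ≤ i
  · simp only [restrictA]
    rw [if_pos hL, if_pos hL, if_pos ⟨hL.1.trans hBC, hL.2.1, hL.2.2.trans hij⟩]
  · simp only [restrictA, if_neg hL]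

lemma IsAddress.restrictA_fst {l j : ℕ} {a : ℕ → ℕ} {x : Addr} (hx : IsAddress l j a x) :
    restrictA x j x.1 = x := by
  refine Prod.ext rfl (funext fun L => ?_)
  simp only [restrictA]
  split_ifs with hL
  · rfl
  · exact (hx.2.2.2 L hL).symm

variable {V : Type*} [DecidableEq V] {F : LabFam V} {i j : ℕ} {T T' M : Finset V}

lemma addrOf_eq_restrictA_iff (hT : Set.InjOn F.vIdx T) (x : Addr) :
    F.addrOf i T = restrictA x i (T.image F.vIdx) ↔
      ∀ M ⊆ T, 2 ≤ #M → #M ≤ i → F.lbl #M M = x.2 (M.image F.vIdx) := by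
  constructor
  · intro h M hM h2 hMi
    have hcard : #(M.image F.vIdx) = #M := card_image_of_injOn (hT.mono hM)
    have hMim := congrFun (congrArg Prod.snd h) (M.image F.vIdx)
    simp only [LabFam.addrOf, restrictA] at hMim
    rwa [if_pos ⟨image_subset_image hM, hcard ▸ h2, hcard ▸ hMi⟩,
      if_pos ⟨image_subset_image hM, hcard ▸ h2, hcard ▸ hMi⟩,
      filter_mem_image_of_injOn hT hM, hcard] at hMim
  · refine fun h => Prod.ext rfl (funext fun L => ?_)
    simp only [LabFam.addrOf, restrictA]
    split_ifs with hL
    · obtain ⟨M, hM, rfl⟩ := subset_image_iff.1 hL.1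
      have hcard : #(M.image F.vIdx) = #M := card_image_of_injOn (hT.mono hM)
      rw [filter_mem_image_of_injOn hT hM, hcard]
      exact h M hM (hcard ▸ hL.2.1) (hcard ▸ hL.2.2)
    · rfl

lemma restrictA_addrOf (hT : Set.InjOn F.vIdx T) (hM : M ⊆ T) (hij : i ≤ j) :
    restrictA (F.addrOf j T) i (M.image F.vIdx) = F.addrOf i M := by
  refine ((addrOf_eq_restrictA_iff (hT.mono hM) _).2 fun N hN h2 hNi => ?_).symm
  have hcard : #(N.image F.vIdx) = #N := card_image_of_injOn (hT.mono (hN.trans hM))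
  simp only [LabFam.addrOf]
  rw [if_pos ⟨image_subset_image (hN.trans hM), hcard ▸ h2, hcard ▸ hNi.trans hij⟩,
    filter_mem_image_of_injOn hT (hN.trans hM), hcard]

lemma addrOf_eq_addrOf_iff (hT : Set.InjOn F.vIdx T) (hT' : Set.InjOn F.vIdx T') :
    F.addrOf i T = F.addrOf i T' ↔ T.image F.vIdx = T'.image F.vIdx ∧
      ∀ M ⊆ T, ∀ M' ⊆ T', M.image F.vIdx = M'.image F.vIdx → 2 ≤ #M → #M ≤ i →
        F.lbl #M M = F.lbl #M M' := by
  have hsnd : ∀ M' ⊆ T', 2 ≤ #M' → #M' ≤ i →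
      (F.addrOf i T').2 (M'.image F.vIdx) = F.lbl #M' M' :=
    fun M' hM' h2 hi => ((addrOf_eq_restrictA_iff hT' (F.addrOf i T')).1
      (restrictA_addrOf hT' Subset.rfl le_rfl).symm M' hM' h2 hi).symm
  have hcard : ∀ {M M'}, M ⊆ T → M' ⊆ T' → M.image F.vIdx = M'.image F.vIdx → #M' = #M := by
    intro M M' hM hM' himage
    rw [← card_image_of_injOn (hT'.mono hM'), ← himage, card_image_of_injOn (hT.mono hM)]
  constructor
  · refine fun h => ⟨congrArg Prod.fst h, fun M hM M' hM' himage h2 hi => ?_⟩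
    have hMM' := hcard hM hM' himage
    rw [(addrOf_eq_restrictA_iff hT (F.addrOf i T')).1
      (h ▸ (restrictA_addrOf hT Subset.rfl le_rfl).symm) M hM h2 hi, himage,
      hsnd M' hM' (by omega) (by omega), hMM']
  · rintro ⟨himage, hlbl⟩
    rw [← restrictA_addrOf hT' Subset.rfl le_rfl, ← himage, addrOf_eq_restrictA_iff hT]
    intro M hM h2 hi
    obtain ⟨M', hM', hMM'⟩ := subset_image_iff.1 (himage ▸ image_subset_image hM)
    have hMc := hcard hM hM' hMM'.symm
    rw [hlbl M hM M' hM' hMM'.symm h2 hi, ← hMM', hsnd M' hM' (by omega) (by omega), hMc]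

lemma addrOf_eq_addrOf_of_le (hT : Set.InjOn F.vIdx T) (hT' : Set.InjOn F.vIdx T') (hij : i ≤ j)
    (h : F.addrOf j T = F.addrOf j T') : F.addrOf i T = F.addrOf i T' := by
  rw [addrOf_eq_addrOf_iff hT hT'] at h ⊢
  exact ⟨h.1, fun M hM M' hM' himage h2 hi => h.2 M hM M' hM' himage h2 (hi.trans hij)⟩

lemma addrOf_eq_addrOf_of_subset (hT : Set.InjOn F.vIdx T) (hT' : Set.InjOn F.vIdx T')
    (h : F.addrOf i T = F.addrOf i T') (hM : M ⊆ T) :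
    ∃ N ⊆ T', #N = #M ∧ F.addrOf i M = F.addrOf i N := by
  have himage : T.image F.vIdx = T'.image F.vIdx := congrArg Prod.fst h
  obtain ⟨N, hN, hNM⟩ := subset_image_iff.1 (himage ▸ image_subset_image hM)
  refine ⟨N, hN, ?_, ?_⟩
  · rw [← card_image_of_injOn (hT'.mono hN), hNM, card_image_of_injOn (hT.mono hM)]
  · rw [← restrictA_addrOf hT hM le_rfl, ← restrictA_addrOf hT' hN le_rfl, h, hNM]

lemma addrOf_succ_eq_iff (hi : 1 ≤ i) (hT : Set.InjOn F.vIdx T) (hT' : Set.InjOn F.vIdx T')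
    (hTc : #T = i + 1) (hTc' : #T' = i + 1) :
    F.addrOf (i + 1) T = F.addrOf (i + 1) T' ↔
      F.addrOf i T = F.addrOf i T' ∧ F.lbl (i + 1) T = F.lbl (i + 1) T' := by
  constructor
  · refine fun h => ⟨addrOf_eq_addrOf_of_le hT hT' i.le_succ h, ?_⟩
    obtain ⟨himage, hlbl⟩ := (addrOf_eq_addrOf_iff hT hT').1 h
    exact hTc ▸ hlbl T Subset.rfl T' Subset.rfl himage (by omega) hTc.le
  · simp only [addrOf_eq_addrOf_iff hT hT']
    rintro ⟨⟨himage, hlbl⟩, htop⟩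
    refine ⟨himage, fun M hM M' hM' hMM' h2 hMi => ?_⟩
    obtain hlt | hMc : #M ≤ i ∨ #M = i + 1 := by omega
    · exact hlbl M hM M' hM' hMM' h2 hlt
    · have hMc' : #M' = i + 1 := by
        rw [← hMc, ← card_image_of_injOn (hT'.mono hM'), ← hMM', card_image_of_injOn (hT.mono hM)]
      rw [eq_of_subset_of_card_le hM (by omega), eq_of_subset_of_card_le hM' (by omega), hTc, htop]

lemma addrOf_eq_addrOf_of_forall_card_eq (hi : 1 ≤ i) (hiT : i ≤ #T) (hcard : #T' ≤ #T)
    (hT : Set.InjOn F.vIdx T) (hT' : Set.InjOn F.vIdx T')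
    (h : ∀ M ⊆ T, #M = i → ∃ N ⊆ T', F.addrOf i M = F.addrOf i N) :
    F.addrOf i T = F.addrOf i T' := by
  have hext : ∀ M ⊆ T, #M ≤ i → ∃ M₁ ⊆ T, M ⊆ M₁ ∧ ∃ N ⊆ T', F.addrOf i M₁ = F.addrOf i N := by
    intro M hM hMi
    obtain ⟨M₁, hMM₁, hM₁, hM₁c⟩ := exists_subsuperset_card_eq hM hMi hiT
    exact ⟨M₁, hM₁, hMM₁, h M₁ hM₁ hM₁c⟩
  have himage : T.image F.vIdx = T'.image F.vIdx := by
    refine eq_of_subset_of_card_le (image_subset_iff.2 fun v hv => ?_) ?_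
    · obtain ⟨M₁, -, hvM₁, N, hN, hMN⟩ := hext {v} (singleton_subset_iff.2 hv) (by simpa using hi)
      have hMN : M₁.image F.vIdx = N.image F.vIdx := congrArg Prod.fst hMN
      exact image_subset_image hN (hMN ▸ mem_image_of_mem _ (singleton_subset_iff.1 hvM₁))
    · rwa [card_image_of_injOn hT, card_image_of_injOn hT']
  refine (addrOf_eq_addrOf_iff hT hT').2 ⟨himage, fun M hM M' hM' hMM' h2 hMi => ?_⟩
  obtain ⟨M₁, hM₁, hMM₁, N, hN, hMN⟩ := hext M hM hMi
  obtain ⟨hMN, hlbl⟩ := (addrOf_eq_addrOf_iff (hT.mono hM₁) (hT'.mono hN)).1 hMN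
  refine hlbl M hMM₁ M' (subset_of_image_subset_image hT' hM' hN ?_) hMM' h2 hMi
  exact hMM' ▸ hMN ▸ image_subset_image hMM₁

lemma addrOf_one (T : Finset V) : F.addrOf 1 T = (T.image F.vIdx, fun _ => 0) :=
  Prod.ext rfl (funext fun _ => if_neg fun h => by omega)

end Addresses

section Labelled

variable {V : Type*} [DecidableEq V] {F : LabFam V} {k i j : ℕ} {a : ℕ → ℕ} {T T' M : Finset V}

lemma LabFam.IsLabeled.mem_cross_iff (h : F.IsLabeled k a) :
    T ∈ F.toPartFam.cross i ↔ T ⊆ F.gnd ∧ #T = i ∧ Set.InjOn F.vIdx T := by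
  simp only [PartFam.cross, mem_filter, mem_powersetCard, and_assoc]
  refine and_congr_right fun hT => and_congr_right fun _ => ⟨fun hcross u hu v hv huv => ?_,
    fun hinj u hu v hv hne huv => hne (hinj hu hv ((h.2.2.1 u (hT hu) v (hT hv)).2 huv))⟩
  by_contra hne
  exact hcross u hu v hv hne ((h.2.2.1 u (hT hu) v (hT hv)).1 huv)

lemma LabFam.IsLabeled.injOn (h : F.IsLabeled k a) (hT : T ∈ F.toPartFam.cross i) :
    Set.InjOn F.vIdx T :=
  (h.mem_cross_iff.1 hT).2.2

lemma LabFam.IsLabeled.mem_cross_of_subset (h : F.IsLabeled k a) (hT : T ∈ F.toPartFam.cross i)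
    (hM : M ⊆ T) (hMc : #M = j) : M ∈ F.toPartFam.cross j :=
  have ⟨hTg, _, hinj⟩ := h.mem_cross_iff.1 hT
  h.mem_cross_iff.2 ⟨hM.trans hTg, hMc, hinj.mono hM⟩

lemma LabFam.IsLabeled.addrOf_eq_iff (h : F.IsLabeled k a) (hi : 1 ≤ i)
    (hT : T ∈ F.toPartFam.cross (i + 1)) (hT' : T' ∈ F.toPartFam.cross (i + 1)) :
    F.addrOf (i + 1) T = F.addrOf (i + 1) T' ↔
      F.addrOf i T = F.addrOf i T' ∧ F.lbl (i + 1) T = F.lbl (i + 1) T' :=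
  addrOf_succ_eq_iff hi (h.injOn hT) (h.injOn hT') (h.mem_cross_iff.1 hT).2.1
    (h.mem_cross_iff.1 hT').2.1

lemma LabFam.IsLabeled.isAddress_addrOf (h : F.IsLabeled k a) (hT : T ∈ F.toPartFam.cross i) :
    IsAddress i (k - 1) a (F.addrOf (k - 1) T) := by
  obtain ⟨hTg, hTc, hinj⟩ := h.mem_cross_iff.1 hT
  refine ⟨by rw [← hTc, ← card_image_of_injOn hinj]; rfl, fun b hb => ?_,
    fun L hL h2 hLk => ?_, fun L hL => if_neg hL⟩
  · obtain ⟨v, hv, rfl⟩ := mem_image.1 hb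
    exact h.2.1 v (hTg hv)
  · obtain ⟨M, hM, rfl⟩ := subset_image_iff.1 hL
    have hMc : #(M.image F.vIdx) = #M := card_image_of_injOn (hinj.mono hM)
    have hlbl := (h.2.2.2 #M (hMc ▸ h2) (hMc ▸ hLk)).1 M (h.mem_cross_of_subset hT hM rfl)
    simp only [LabFam.addrOf]
    rwa [if_pos ⟨hL, h2, hLk⟩, filter_mem_image_of_injOn hinj hM, hMc]

lemma LabFam.IsLabeled.sup_vClass (h : F.IsLabeled k a) (hT : T ⊆ F.gnd) :
    T.sup F.vClass = {v ∈ F.gnd | F.vIdx v ∈ T.image F.vIdx} := by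
  ext v
  simp only [mem_sup, mem_filter, mem_image]
  constructor
  · rintro ⟨w, hw, hv⟩
    have hvg := h.1.2.1 w (hT hw) hv
    exact ⟨hvg, w, hw,
      ((h.2.2.1 v hvg w (hT hw)).2 (h.1.2.2.1 v hvg w (hT hw) hv)).symm⟩
  · rintro ⟨hvg, w, hw, hwv⟩
    exact ⟨w, hw, (h.2.2.1 w (hT hw) v hvg).1 hwv ▸ h.1.1 v hvg⟩

lemma LabFam.IsLabeled.polyad_eq_of_cls_eq (h : F.IsLabeled k a)
    (hcls : 2 ≤ j → ∀ M ∈ F.toPartFam.cross j, ∀ N ∈ F.toPartFam.cross j,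
      F.addrOf j M = F.addrOf j N → F.cls j M = F.cls j N)
    (hj : 1 ≤ j) (hT : T ∈ F.toPartFam.cross i) (hT' : T' ∈ F.toPartFam.cross i)
    (haddr : F.addrOf j T = F.addrOf j T') :
    F.toPartFam.polyad j T = F.toPartFam.polyad j T' := by
  obtain rfl | hj2 := hj.eq_or_lt'
  · have himage : T.image F.vIdx = T'.image F.vIdx := congrArg Prod.fst haddr
    simp only [PartFam.polyad, if_true]
    rw [h.sup_vClass (h.mem_cross_iff.1 hT).1, h.sup_vClass (h.mem_cross_iff.1 hT').1, himage]
  · have hle : ∀ T T' : Finset V, T ∈ F.toPartFam.cross i → T' ∈ F.toPartFam.cross i →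
        F.addrOf j T = F.addrOf j T' →
        (T.powersetCard j).sup (F.cls j) ≤ (T'.powersetCard j).sup (F.cls j) := by
      intro T T' hT hT' haddr
      refine Finset.sup_le fun M hM => ?_
      obtain ⟨hMT, hMc⟩ := mem_powersetCard.1 hM
      obtain ⟨N, hN, hNc, hMN⟩ :=
        addrOf_eq_addrOf_of_subset (h.injOn hT) (h.injOn hT') haddr hMT
      rw [hcls hj2 M (h.mem_cross_of_subset hT hMT hMc) N
        (h.mem_cross_of_subset hT' hN (hNc.trans hMc)) hMN]
      exact Finset.le_sup (f := F.cls j) (mem_powersetCard.2 ⟨hN, hNc.trans hMc⟩)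
    simp only [PartFam.polyad, if_neg hj2.ne']
    exact le_antisymm (hle T T' hT hT' haddr) (hle T' T hT' hT haddr.symm)

lemma LabFam.IsLabeled.cls_eq_of_addrOf_eq (h : F.IsLabeled k a) (hi : 2 ≤ i) (hik : i ≤ k - 1)
    (hT : T ∈ F.toPartFam.cross i) (hT' : T' ∈ F.toPartFam.cross i)
    (haddr : F.addrOf i T = F.addrOf i T') : F.cls i T = F.cls i T' := by
  induction i generalizing T T' with
  | zero => omega
  | succ i ih =>
    obtain ⟨haddr, hlbl⟩ := (h.addrOf_eq_iff (by omega) hT hT').1 haddr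
    refine (h.2.2.2 (i + 1) hi hik).2.2 T hT T' hT' ?_ hlbl
    exact h.polyad_eq_of_cls_eq (fun h2 M hM N hN => ih h2 (by omega) hM hN) (by omega) hT hT'
      haddr

lemma LabFam.IsLabeled.polyad_eq_of_addrOf_eq (h : F.IsLabeled k a) (hj : 1 ≤ j) (hjk : j ≤ k - 1)
    (hT : T ∈ F.toPartFam.cross i) (hT' : T' ∈ F.toPartFam.cross i)
    (haddr : F.addrOf j T = F.addrOf j T') :
    F.toPartFam.polyad j T = F.toPartFam.polyad j T' :=
  h.polyad_eq_of_cls_eq (fun h2 _ hM _ hN => h.cls_eq_of_addrOf_eq h2 hjk hM hN) hj hT hT' haddr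

lemma LabFam.IsLabeled.addrOf_one_eq_of_mem_polyCliques (h : F.IsLabeled k a)
    (hT : T ∈ F.toPartFam.cross 2) (hT' : T' ∈ F.toPartFam.polyCliques 2 T) :
    F.addrOf 1 T' = F.addrOf 1 T := by
  simp only [PartFam.polyCliques, KsetC, PartFam.polyad, Nat.add_one_sub_one, if_true, mem_filter,
    sing, mem_image, singleton_inj, exists_eq_right, h.sup_vClass (h.mem_cross_iff.1 hT).1] at hT'
  have hcard : #T = #T' := by
    rw [(h.mem_cross_iff.1 hT).2.1, (h.mem_cross_iff.1 hT'.1).2.1]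
  rw [addrOf_one, addrOf_one]
  congr 1
  refine eq_of_subset_of_card_le (image_subset_iff.2 fun v hv => ?_) ?_
  · exact mem_image.2 (hT'.2 v hv).2
  · rw [card_image_of_injOn (h.injOn hT), card_image_of_injOn (h.injOn hT'.1), hcard]

lemma LabFam.IsLabeled.addrOf_eq_of_mem_polyCliques (h : F.IsLabeled k a) (hj : 1 ≤ j)
    (hjk : j + 1 ≤ k - 1) (hT : T ∈ F.toPartFam.cross (j + 1))
    (hT' : T' ∈ F.toPartFam.polyCliques (j + 1) T) : F.addrOf j T' = F.addrOf j T := by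
  induction j generalizing T T' with
  | zero => omega
  | succ j ih =>
    obtain rfl | hj := j.eq_zero_or_pos
    · exact h.addrOf_one_eq_of_mem_polyCliques hT hT'
    have hT'cross := (h.1.2.2.2.2.2 (j + 2) (by omega) hjk).2.2.2.1 T hT hT'
    have hTc := (h.mem_cross_iff.1 hT).2.1
    have hTc' := (h.mem_cross_iff.1 hT'cross).2.1
    refine addrOf_eq_addrOf_of_forall_card_eq (by omega) (by omega) (by omega) (h.injOn hT'cross)
      (h.injOn hT) fun M hM hMc => ?_
    simp only [PartFam.polyCliques, KsetC, PartFam.polyad, Nat.add_succ_sub_one,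
      if_neg (show j + 1 ≠ 1 by omega), Kset, mem_filter, mem_sup] at hT'
    obtain ⟨N, hN, hMN⟩ := hT'.2 M (mem_powersetCard.2 ⟨hM, hMc⟩)
    obtain ⟨hNT, hNc⟩ := mem_powersetCard.1 hN
    have hMcross := h.mem_cross_of_subset hT'cross hM hMc
    have hNcross := h.mem_cross_of_subset hT hNT hNc
    refine ⟨N, hNT, (h.addrOf_eq_iff hj hMcross hNcross).2 ⟨?_, ?_⟩⟩
    · exact ih hj (by omega) hNcross
        ((h.1.2.2.2.2.2 (j + 1) (by omega) (by omega)).2.2.1 N hNcross hMN)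
    · exact (h.2.2.2 (j + 1) (by omega) (by omega)).2.1 N hNcross M hMN

lemma LabFam.IsLabeled.mem_cls_iff (h : F.IsLabeled k a) (hi : 1 ≤ i) (hik : i + 1 ≤ k - 1)
    (hT : T ∈ F.toPartFam.cross (i + 1)) (hT' : T' ∈ F.toPartFam.cross (i + 1)) :
    T ∈ F.cls (i + 1) T' ↔ F.addrOf (i + 1) T = F.addrOf (i + 1) T' := by
  have hfam := h.1.2.2.2.2.2 (i + 1) (by omega) hik
  constructor
  · refine fun hmem => (h.addrOf_eq_iff hi hT hT').2 ⟨?_, ?_⟩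
    · exact h.addrOf_eq_of_mem_polyCliques hi hik hT' (hfam.2.2.1 T' hT' hmem)
    · exact (h.2.2.2 (i + 1) (by omega) hik).2.1 T' hT' T hmem
  · intro haddr
    rw [← h.cls_eq_of_addrOf_eq (by omega) hik hT hT' haddr]
    exact hfam.1 T hT

lemma LabFam.IsLabeled.exists_lbl_eq (h : F.IsLabeled k a) (hj : 1 ≤ j) (hjk : j + 1 ≤ k - 1)
    (hT : T ∈ F.toPartFam.cross (j + 1)) {b : ℕ} (hb : 1 ≤ b) (hba : b ≤ a (j + 1)) :
    ∃ T' ∈ F.toPartFam.cross (j + 1), F.addrOf j T' = F.addrOf j T ∧ F.lbl (j + 1) T' = b := by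
  have hfam := h.1.2.2.2.2.2 (j + 1) (by omega) hjk
  have hlab := h.2.2.2 (j + 1) (by omega) hjk
  have hcross := hfam.2.2.2.1 T hT
  have haddr : ∀ M ∈ F.toPartFam.polyCliques (j + 1) T, F.addrOf j M = F.addrOf j T :=
    fun M hM => h.addrOf_eq_of_mem_polyCliques hj hjk hT hM
  obtain ⟨T', hT', hlbl⟩ := exists_eq_of_card_image_eq (g := F.lbl (j + 1)) (hfam.2.2.2.2 T hT)
    (fun M hM => hlab.1 M (hcross hM)) (fun M hM N hN hMN => hlab.2.2 M (hcross hM) N (hcross hN)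
      (h.polyad_eq_of_addrOf_eq hj (by omega) (hcross hM) (hcross hN)
        ((haddr M hM).trans (haddr N hN).symm)) hMN) hb hba
  exact ⟨T', hcross hT', haddr T' hT', hlbl⟩

lemma LabFam.IsLabeled.exists_vIdx_eq (h : F.IsLabeled k a) {b : ℕ} (hb : 1 ≤ b) (hba : b ≤ a 1) :
    ∃ v ∈ F.gnd, F.vIdx v = b :=
  exists_eq_of_card_image_eq h.1.2.2.2.1 h.2.1 (fun u hu v hv => (h.2.2.1 u hu v hv).1) hb hba

lemma LabFam.IsLabeled.exists_insert_mem_cross (h : F.IsLabeled k a)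
    (hT : T ∈ F.toPartFam.cross j) (hj : j < a 1) :
    ∃ v, insert v T ∈ F.toPartFam.cross (j + 1) := by
  obtain ⟨hTg, hTc, hinj⟩ := h.mem_cross_iff.1 hT
  obtain ⟨b, hb, hbT⟩ : ∃ b ∈ Icc 1 (a 1), b ∉ T.image F.vIdx :=
    exists_mem_notMem_of_card_lt_card (by simpa [card_image_of_injOn hinj, hTc] using hj)
  obtain ⟨v, hv, rfl⟩ := h.exists_vIdx_eq (mem_Icc.1 hb).1 (mem_Icc.1 hb).2
  have hvT : v ∉ T := fun hvT => hbT (mem_image_of_mem _ hvT)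
  refine ⟨v, h.mem_cross_iff.2 ⟨insert_subset hv hTg, by rw [card_insert_of_notMem hvT, hTc], ?_⟩⟩
  rw [coe_insert, Set.injOn_insert (mem_coe.not.2 hvT)]
  exact ⟨hinj, by simpa using hbT⟩

lemma LabFam.IsLabeled.exists_cross_superset (h : F.IsLabeled k a) {m : ℕ}
    (hT : T ∈ F.toPartFam.cross j) (hjm : j ≤ m) (hm : m ≤ a 1) :
    ∃ K ∈ F.toPartFam.cross m, T ⊆ K := by
  induction m, hjm using Nat.le_induction with
  | base => exact ⟨T, hT, Subset.rfl⟩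
  | succ m _ ih =>
    obtain ⟨K, hK, hTK⟩ := ih (by omega)
    obtain ⟨v, hv⟩ := h.exists_insert_mem_cross hK (by omega)
    exact ⟨insert v K, hv, hTK.trans (subset_insert v K)⟩

lemma LabFam.IsLabeled.mem_polyad_of_subset (h : F.IsLabeled k a) (hi : 1 ≤ i) (hik : i ≤ k - 1)
    (hT : T ∈ F.toPartFam.cross j) (hM : M ⊆ T) (hMc : #M = i) : M ∈ F.toPartFam.polyad i T := by
  unfold PartFam.polyad
  split_ifs with hi1
  · obtain ⟨v, rfl⟩ := card_eq_one.1 (hMc.trans hi1)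
    have hv := singleton_subset_iff.1 hM
    exact mem_image_of_mem _ (mem_sup.2 ⟨v, hv, h.1.1 v ((h.mem_cross_iff.1 hT).1 hv)⟩)
  · refine mem_sup.2 ⟨M, mem_powersetCard.2 ⟨hM, hMc⟩, ?_⟩
    exact (h.1.2.2.2.2.2 i (by omega) hik).1 M (h.mem_cross_of_subset hT hM hMc)

lemma LabFam.IsLabeled.mem_polyad_iff (h : F.IsLabeled k a) (hj : 1 ≤ j) (hjk : j + 1 ≤ k - 1)
    {K : Finset V} {m : ℕ} (hK : K ∈ F.toPartFam.cross m) (hTK : T ⊆ K)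
    (hT : T ∈ F.toPartFam.cross (j + 1)) (hT' : T' ∈ F.toPartFam.cross (j + 1))
    (haddr : F.addrOf j T' = F.addrOf j T) :
    T' ∈ F.toPartFam.polyad (j + 1) K ↔ F.lbl (j + 1) T' = F.lbl (j + 1) T := by
  have hTT' := h.addrOf_eq_iff hj hT' hT
  simp only [haddr, true_and] at hTT'
  have hTc := (h.mem_cross_iff.1 hT).2.1
  rw [PartFam.polyad, if_neg (by omega), mem_sup, ← hTT', ← h.mem_cls_iff hj hjk hT' hT]
  refine ⟨fun ⟨M, hM, hMT'⟩ => ?_, fun hmem => ⟨T, mem_powersetCard.2 ⟨hTK, hTc⟩, hmem⟩⟩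
  obtain ⟨hMK, hMc⟩ := mem_powersetCard.1 hM
  have hMcross := h.mem_cross_of_subset hK hMK hMc
  have himage : M.image F.vIdx = T.image F.vIdx :=
    (congrArg Prod.fst ((h.mem_cls_iff hj hjk hT' hMcross).1 hMT')).symm.trans
      (congrArg Prod.fst haddr)
  have hMT : M = T := eq_of_subset_of_card_le
    (subset_of_image_subset_image (h.injOn hK) hMK hTK himage.subset) (by omega)
  exact hMT ▸ hMT'

lemma LabFam.IsLabeled.mem_polyAt (h : F.IsLabeled k a) {x : Addr} (hT : T ∈ F.toPartFam.cross i)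
    (hTx : T.image F.vIdx ⊆ x.1) (hi : 1 ≤ i)
    (haddr : F.addrOf i T = restrictA x i (T.image F.vIdx)) : T ∈ F.polyAt i x := by
  obtain ⟨hTg, hTc, hinj⟩ := h.mem_cross_iff.1 hT
  unfold LabFam.polyAt
  split_ifs with hi1
  · obtain ⟨v, rfl⟩ := card_eq_one.1 (hTc.trans hi1)
    have hv := mem_singleton_self v
    exact mem_image_of_mem _ (mem_filter.2 ⟨hTg hv, hTx (mem_image_of_mem _ hv)⟩)
  · have himage : #(T.image F.vIdx) = i := (card_image_of_injOn hinj).trans hTc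
    refine mem_sup.2 ⟨T.image F.vIdx, mem_powersetCard.2 ⟨hTx, himage⟩, ?_⟩
    rw [LabFam.partAt, if_neg (by omega)]
    refine mem_filter.2 ⟨hT, ?_, ?_⟩
    · rw [← restrictA_restrictA x (Nat.sub_le i 1) Subset.rfl, ← haddr,
        restrictA_addrOf hinj Subset.rfl (Nat.sub_le i 1)]
    · rw [← hTc]
      exact (addrOf_eq_restrictA_iff hinj x).1 haddr T Subset.rfl (by omega) hTc.le

/-- Equitability only asserts the regularity of polyads of crossing `k`-sets, so the part with
label `b` has to be realised inside such a polyad. -/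
lemma LabFam.IsLabeled.exists_regPairC_polyad (h : F.IsLabeled k a) {ε : ℝ}
    (hreg : F.toPartFam.PolyadReg k a ε) (hj : 1 ≤ j) (hjk : j + 1 ≤ k - 1)
    (hT : T ∈ F.toPartFam.cross (j + 1)) {b : ℕ} (hb : 1 ≤ b) (hba : b ≤ a (j + 1)) :
    ∃ A, RegPairC F.gnd (F.toPartFam.cross (j + 1)) j ε (1 / (a (j + 1) : ℝ)) A
        (F.toPartFam.polyad j T) ∧
      ∀ T' ∈ F.toPartFam.cross (j + 1), F.addrOf j T' = F.addrOf j T →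
        (T' ∈ A ↔ F.lbl (j + 1) T' = b) := by
  obtain ⟨I, hI, hIT, hIb⟩ := h.exists_lbl_eq hj hjk hT hb hba
  obtain ⟨K, hK, hIK⟩ := h.exists_cross_superset hI (by omega : j + 1 ≤ k) h.1.2.2.2.2.1
  refine ⟨F.toPartFam.polyad (j + 1) K, ?_, fun T' hT' haddr => ?_⟩
  · rw [← h.polyad_eq_of_addrOf_eq hj (by omega) hI hT hIT]
    exact hreg K hK (j + 1) (by omega) hjk I
      (mem_powersetCard.2 ⟨hIK, (h.mem_cross_iff.1 hI).2.1⟩)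
  · rw [← hIb]
    exact h.mem_polyad_iff hj hjk hK hIK hI hT' (haddr.trans hIT.symm)

end Labelled

section Cliques

variable {V : Type*} [DecidableEq V]

lemma KsetC_mono {W : Finset V} {cr Q B : Finset (Finset V)} (hQB : Q ⊆ B) (i j : ℕ) :
    KsetC W cr i j Q ⊆ KsetC W cr i j B := by
  unfold KsetC Kset
  split_ifs
  · exact monotone_filter_right _ fun S _ hS v hv => hQB (hS v hv)
  · exact monotone_filter_right _ fun S _ hS T hT => hQB (hS T hT)

lemma abs_card_inter_sub_mul_card_le {A K : Finset V} {δ : ℝ} (hδ₀ : 0 ≤ δ) (hδ₁ : δ ≤ 1) :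
    |(#(A ∩ K) : ℝ) - δ * #K| ≤ #K := by
  have hle : (#(A ∩ K) : ℝ) ≤ #K := by exact_mod_cast card_le_card inter_subset_right
  rw [abs_le]
  constructor <;> nlinarith [(#(A ∩ K)).cast_nonneg (α := ℝ), (#K).cast_nonneg (α := ℝ)]

lemma RegPairC.abs_card_inter_sub_le {W : Finset V} {cr A B Q : Finset (Finset V)} {j : ℕ}
    {ε δ : ℝ} (hreg : RegPairC W cr j ε δ A B) (hε : 0 ≤ ε) (hδ₀ : 0 ≤ δ) (hδ₁ : δ ≤ 1)
    (hQB : Q ⊆ B) :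
    |(#(A ∩ KsetC W cr j (j + 1) Q) : ℝ) - δ * #(KsetC W cr j (j + 1) Q)|
      ≤ ε * #(KsetC W cr j (j + 1) B) := by
  obtain hlarge | hsmall := le_or_gt (ε * (#(KsetC W cr j (j + 1) B) : ℝ))
    #(KsetC W cr j (j + 1) Q)
  · have hcard := card_le_card (KsetC_mono (W := W) (cr := cr) hQB j (j + 1))
    exact (hreg Q hQB hlarge).trans (by gcongr)
  · exact (abs_card_inter_sub_mul_card_le hδ₀ hδ₁).trans hsmall.le

variable {F : LabFam V} {k i : ℕ} {a : ℕ → ℕ}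

lemma card_KsetC_cross_le (B : Finset (Finset V)) :
    #(KsetC F.gnd (F.toPartFam.cross (i + 1)) i (i + 1) B) ≤ #F.gnd ^ (i + 1) := by
  have hsub : KsetC F.gnd (F.toPartFam.cross (i + 1)) i (i + 1) B ⊆ F.gnd.powersetCard (i + 1) := by
    unfold KsetC
    split_ifs
    · exact (filter_subset _ _).trans (filter_subset _ _)
    · exact filter_subset _ _
  exact (card_le_card hsub).trans ((card_powersetCard _ _).trans_le (Nat.choose_le_pow _ _))

lemma LabFam.IsLabeled.mem_KsetC_iff (h : F.IsLabeled k a) (hi : 1 ≤ i) {Q : Finset (Finset V)}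
    (hQ : Q ⊆ F.toPartFam.cross i) {S : Finset V} :
    S ∈ KsetC F.gnd (F.toPartFam.cross (i + 1)) i (i + 1) Q ↔
      S ∈ F.toPartFam.cross (i + 1) ∧ ∀ T ⊆ S, #T = i → T ∈ Q := by
  unfold KsetC
  split_ifs with hi1
  · subst hi1
    simp only [mem_filter, card_eq_one]
    refine and_congr_right fun _ => ⟨?_, fun hS v hv => hS {v} (singleton_subset_iff.2 hv) ⟨v, rfl⟩⟩
    rintro hS _ hv ⟨v, rfl⟩
    exact hS v (singleton_subset_iff.1 hv)
  · simp only [Kset, mem_filter, mem_powersetCard, and_imp]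
    refine ⟨fun ⟨⟨hSg, hSc⟩, hS⟩ => ⟨h.mem_cross_iff.2 ⟨hSg, hSc, fun u hu v hv huv => ?_⟩, hS⟩,
      fun ⟨hScross, hS⟩ => ?_⟩
    · obtain ⟨T, huvT, hTS, hTc⟩ := exists_subsuperset_card_eq
        (insert_subset hu (singleton_subset_iff.2 hv)) (card_le_two.trans (by omega : 2 ≤ i))
        (by omega)
      exact h.injOn (hQ (hS T hTS hTc)) (huvT (mem_insert_self u {v}))
        (huvT (mem_insert_of_mem (mem_singleton_self v))) huv
    · obtain ⟨hSg, hSc, -⟩ := h.mem_cross_iff.1 hScross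
      exact ⟨⟨hSg, hSc⟩, hS⟩

end Cliques

section Placements

variable {V : Type*} [DecidableEq V] {F : LabFam V} {k i : ℕ} {a : ℕ → ℕ}
  {W : Type*} [Fintype W] [DecidableEq W] {σ : W → ℕ} {J : Finset W} {e e' e₀ : W → V}

/-- The maps `W → V` that send each `v` into the vertex class with index `σ v`. -/
def placements (F : LabFam V) (σ : W → ℕ) : Finset (W → V) :=
  Fintype.piFinset fun v => {u ∈ F.gnd | F.vIdx u = σ v}

lemma mem_placements : e ∈ placements F σ ↔ ∀ v, e v ∈ F.gnd ∧ F.vIdx (e v) = σ v := by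
  simp only [placements, Fintype.mem_piFinset, mem_filter]

lemma eq_of_placements_eq (hσ : Function.Injective σ) (he : e ∈ placements F σ)
    (he' : e' ∈ placements F σ) {v w : W} (hvw : e v = e' w) : v = w :=
  hσ (by rw [← (mem_placements.1 he v).2, hvw, (mem_placements.1 he' w).2])

lemma injective_of_mem_placements (hσ : Function.Injective σ) (he : e ∈ placements F σ) :
    Function.Injective e :=
  fun _ _ => eq_of_placements_eq hσ he he

lemma image_vIdx_image (he : e ∈ placements F σ) (I : Finset W) :
    (I.image e).image F.vIdx = I.image σ := by
  rw [image_image]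
  exact image_congr fun v _ => (mem_placements.1 he v).2

lemma LabFam.IsLabeled.image_mem_cross (h : F.IsLabeled k a) (hσ : Function.Injective σ)
    (he : e ∈ placements F σ) (I : Finset W) : I.image e ∈ F.toPartFam.cross #I := by
  have hcard : #(I.image e) = #I := card_image_of_injective _ (injective_of_mem_placements hσ he)
  refine h.mem_cross_iff.2 ⟨image_subset_iff.2 fun v _ => (mem_placements.1 he v).1, hcard, ?_⟩
  rw [← card_image_iff, image_vIdx_image he, hcard, card_image_of_injective _ hσ]

lemma exists_placement_image_eq (he₀ : e₀ ∈ placements F σ) {S : Finset V} (hS : S ⊆ F.gnd)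
    (hinj : Set.InjOn F.vIdx S) (himage : S.image F.vIdx = J.image σ) :
    ∃ e ∈ placements F σ, (∀ v ∉ J, e v = e₀ v) ∧ J.image e = S := by
  have hex : ∀ v, ∃ u ∈ F.gnd, F.vIdx u = σ v ∧ (v ∈ J → u ∈ S) ∧ (v ∉ J → u = e₀ v) := by
    intro v
    by_cases hv : v ∈ J
    · obtain ⟨u, hu, huv⟩ := mem_image.1 (himage ▸ mem_image_of_mem σ hv)
      exact ⟨u, hS hu, huv, fun _ => hu, fun hvJ => absurd hv hvJ⟩
    · obtain ⟨hg, hidx⟩ := mem_placements.1 he₀ v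
      exact ⟨e₀ v, hg, hidx, fun hvJ => absurd hvJ hv, fun _ => rfl⟩
  choose e heg hidx heS heJ using hex
  refine ⟨e, mem_placements.2 fun v => ⟨heg v, hidx v⟩, heJ, ?_⟩
  refine Subset.antisymm (image_subset_iff.2 heS) fun u hu => ?_
  obtain ⟨v, hv, hvu⟩ := mem_image.1 (himage ▸ mem_image_of_mem F.vIdx hu)
  exact mem_image.2 ⟨v, hv, hinj (heS v hv) hu ((hidx v).trans hvu)⟩

lemma injOn_image_of_eq_off (hσ : Function.Injective σ) {G : Finset (W → V)}
    (hG : G ⊆ placements F σ) (hoff : ∀ e ∈ G, ∀ v ∉ J, e v = e₀ v) :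
    Set.InjOn (fun e : W → V => J.image e) G := by
  intro e he e' he' hJe
  have hJ : J.image e = J.image e' := hJe
  funext v
  by_cases hv : v ∈ J
  · obtain ⟨w, -, hw⟩ := mem_image.1 (hJ ▸ mem_image_of_mem e hv)
    rw [← hw, eq_of_placements_eq hσ (hG he') (hG he) hw]
  · rw [hoff e he v hv, hoff e' he' v hv]

/-- A set of extensions of `e₀` that is determined by restrictions to `i`-subsets of `J` is a full
clique set; this is what makes regularity applicable to it. -/
lemma LabFam.IsLabeled.KsetC_biUnion_eq_image (h : F.IsLabeled k a) (hσ : Function.Injective σ)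
    (hi : 1 ≤ i) (hJ : #J = i + 1) (he₀ : e₀ ∈ placements F σ) {G : Finset (W → V)}
    (hG : G ⊆ placements F σ)
    (hclosed : ∀ e ∈ placements F σ, (∀ v ∉ J, e v = e₀ v) →
      (∀ I ⊆ J, #I = i → ∃ e' ∈ G, ∀ v ∈ I, e' v = e v) → e ∈ G) :
    KsetC F.gnd (F.toPartFam.cross (i + 1)) i (i + 1)
      (G.biUnion fun e => (J.image e).powersetCard i) = G.image fun e => J.image e := by
  set Q := G.biUnion fun e => (J.image e).powersetCard i with hQ
  have hQ_iff : ∀ T, T ∈ Q ↔ ∃ e ∈ G, T ⊆ J.image e ∧ #T = i := by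
    simp only [hQ, mem_biUnion, mem_powersetCard, implies_true]
  have hJcross : ∀ e ∈ G, J.image e ∈ F.toPartFam.cross (i + 1) :=
    fun e he => hJ ▸ h.image_mem_cross hσ (hG he) J
  have hQcross : Q ⊆ F.toPartFam.cross i := fun T hT =>
    have ⟨e, he, hTJ, hTc⟩ := (hQ_iff T).1 hT
    h.mem_cross_of_subset (hJcross e he) hTJ hTc
  ext S
  rw [h.mem_KsetC_iff hi hQcross, mem_image]
  constructor
  · rintro ⟨hS, hSQ⟩
    obtain ⟨hSg, hSc, hinj⟩ := h.mem_cross_iff.1 hS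
    have himage : S.image F.vIdx = J.image σ := by
      refine eq_of_subset_of_card_le (image_subset_iff.2 fun v hv => ?_) ?_
      · obtain ⟨T, hvT, hTS, hTc⟩ := exists_subsuperset_card_eq (n := i)
          (singleton_subset_iff.2 hv) (by simpa using hi) (by omega)
        obtain ⟨e, he, hTe, -⟩ := (hQ_iff T).1 (hSQ T hTS hTc)
        rw [← image_vIdx_image (hG he)]
        exact mem_image_of_mem _ (hTe (singleton_subset_iff.1 hvT))
      · rw [card_image_of_injOn hinj, hSc, ← hJ, card_image_of_injective _ hσ]
    obtain ⟨e, he, heoff, rfl⟩ := exists_placement_image_eq he₀ hSg hinj himage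
    refine ⟨e, hclosed e he heoff fun I hI hIc => ?_, rfl⟩
    obtain ⟨e', he', hIe', -⟩ := (hQ_iff (I.image e)).1 <| hSQ _ (image_subset_image hI)
      (hIc ▸ card_image_of_injective I (injective_of_mem_placements hσ he))
    refine ⟨e', he', fun v hv => ?_⟩
    obtain ⟨w, -, hw⟩ := mem_image.1 (hIe' (mem_image_of_mem e hv))
    rw [← hw, eq_of_placements_eq hσ (hG he') he hw]
  · rintro ⟨e, he, rfl⟩
    exact ⟨hJcross e he, fun T hT hTc => (hQ_iff T).2 ⟨e, he, hT, hTc⟩⟩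

lemma LabFam.IsLabeled.abs_card_filter_image_mem_sub_le (h : F.IsLabeled k a)
    (hσ : Function.Injective σ) (hi : 1 ≤ i) (hJ : #J = i + 1) (he₀ : e₀ ∈ placements F σ)
    {G : Finset (W → V)} (hG : G ⊆ placements F σ) (hoff : ∀ e ∈ G, ∀ v ∉ J, e v = e₀ v)
    (hclosed : ∀ e ∈ placements F σ, (∀ v ∉ J, e v = e₀ v) →
      (∀ I ⊆ J, #I = i → ∃ e' ∈ G, ∀ v ∈ I, e' v = e v) → e ∈ G)
    {ε δ : ℝ} (hε : 0 ≤ ε) (hδ₀ : 0 ≤ δ) (hδ₁ : δ ≤ 1) {A B : Finset (Finset V)}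
    (hreg : RegPairC F.gnd (F.toPartFam.cross (i + 1)) i ε δ A B)
    (hB : ∀ e ∈ G, ∀ I ⊆ J, #I = i → I.image e ∈ B) :
    |(#{e ∈ G | J.image e ∈ A} : ℝ) - δ * #G| ≤ ε * (#F.gnd : ℝ) ^ #J := by
  have hQB : (G.biUnion fun e => (J.image e).powersetCard i) ⊆ B := by
    intro T hT
    obtain ⟨e, he, hTe⟩ := mem_biUnion.1 hT
    obtain ⟨hTJ, hTc⟩ := mem_powersetCard.1 hTe
    obtain ⟨I, hI, rfl⟩ := subset_image_iff.1 hTJ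
    exact hB e he I hI
      (hTc ▸ (card_image_of_injective I (injective_of_mem_placements hσ (hG he))).symm)
  have hinj := injOn_image_of_eq_off hσ hG hoff
  have hinter : #(A ∩ G.image fun e => J.image e) = #{e ∈ G | J.image e ∈ A} := by
    rw [inter_comm, ← filter_mem_eq_inter, filter_image,
      card_image_of_injOn (hinj.mono (filter_subset _ G))]
  have hest := hreg.abs_card_inter_sub_le hε hδ₀ hδ₁ hQB
  rw [h.KsetC_biUnion_eq_image hσ hi hJ he₀ hG hclosed, hinter,
    card_image_of_injOn hinj] at hest
  have hcard : (#(KsetC F.gnd (F.toPartFam.cross (i + 1)) i (i + 1) B) : ℝ) ≤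
      (#F.gnd : ℝ) ^ (i + 1) := by exact_mod_cast card_KsetC_cross_le B
  rw [hJ]
  exact hest.trans (by gcongr)

end Placements

section Averaging

lemma abs_card_filter_sub_le_of_fiber {V W : Type*} [DecidableEq V] [Fintype W] [DecidableEq W]
    {U : Finset V} {E : Finset (W → V)} (hE : E ⊆ Fintype.piFinset fun _ => U) {J : Finset W}
    {P : (W → V) → Prop} {ε δ : ℝ} (hε : 0 ≤ ε)
    (hfiber : ∀ e₀ ∈ E,
      |(#{e ∈ {e ∈ E | ∀ v ∉ J, e v = e₀ v} | P e} : ℝ) - δ * #{e ∈ E | ∀ v ∉ J, e v = e₀ v}|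
        ≤ ε * (#U : ℝ) ^ #J) :
    |(#{e ∈ E | P e} : ℝ) - δ * #E| ≤ ε * (#U : ℝ) ^ Fintype.card W := by
  let r : (W → V) → {v // v ∉ J} → V := fun e v => e v
  have hr : ∀ e e₀ : W → V, r e = r e₀ ↔ ∀ v ∉ J, e v = e₀ v := fun e e₀ => by
    simp only [r, funext_iff, Subtype.forall]
  have hcard : (#(E.image r) : ℝ) ≤ (#U : ℝ) ^ (Fintype.card W - #J) := by
    have hsub : E.image r ⊆ Fintype.piFinset fun _ => U := image_subset_iff.2 fun e he =>
      Fintype.mem_piFinset.2 fun v => Fintype.mem_piFinset.1 (hE he) v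
    have hle := card_le_card hsub
    rw [Fintype.card_piFinset, prod_const, card_univ, Fintype.card_subtype_compl,
      Fintype.card_coe] at hle
    exact_mod_cast hle
  have hP : #{e ∈ E | P e} = ∑ ρ ∈ E.image r, #{e ∈ {e ∈ E | r e = ρ} | P e} := by
    simp_rw [filter_comm (s := E) (p := fun e => r e = _)]
    exact card_eq_sum_card_fiberwise fun e he =>
      mem_image_of_mem r (mem_filter.1 he).1
  calc |(#{e ∈ E | P e} : ℝ) - δ * #E|
      = |∑ ρ ∈ E.image r,
          ((#{e ∈ {e ∈ E | r e = ρ} | P e} : ℝ) - δ * #{e ∈ E | r e = ρ})| := by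
        rw [hP, card_eq_sum_card_image r E, sum_sub_distrib, ← mul_sum]
        push_cast
        rfl
    _ ≤ ∑ _ρ ∈ E.image r, ε * (#U : ℝ) ^ #J := by
        refine (abs_sum_le_sum_abs _ _).trans (sum_le_sum fun ρ hρ => ?_)
        obtain ⟨e₀, he₀, rfl⟩ := mem_image.1 hρ
        simp only [hr]
        exact hfiber e₀ he₀
    _ ≤ (#U : ℝ) ^ (Fintype.card W - #J) * (ε * (#U : ℝ) ^ #J) := by
        rw [sum_const, nsmul_eq_mul]
        gcongr
    _ = ε * (#U : ℝ) ^ Fintype.card W := by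
        rw [mul_left_comm, ← pow_add, Nat.sub_add_cancel (card_le_univ J)]

/-- A telescoping argument: `y S` is the number of objects satisfying the conditions in `S`, which
are imposed in order of increasing rank. -/
lemma abs_sub_prod_mul_le_of_insert {ι : Type*} [DecidableEq ι] {𝒮 : Finset ι} {y : Finset ι → ℝ}
    {δ : ι → ℝ} {η : ℝ} (rank : ι → ℕ) (hδ₀ : ∀ J ∈ 𝒮, 0 ≤ δ J) (hδ₁ : ∀ J ∈ 𝒮, δ J ≤ 1)
    (hstep : ∀ S ⊆ 𝒮, ∀ J ∈ 𝒮, J ∉ S → (∀ J' ∈ S, rank J' ≤ rank J) →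
      (∀ J' ∈ 𝒮, rank J' < rank J → J' ∈ S) → |y (insert J S) - δ J * y S| ≤ η) :
    |y 𝒮 - (∏ J ∈ 𝒮, δ J) * y ∅| ≤ #𝒮 * η := by
  suffices hinitial : ∀ S, S ⊆ 𝒮 → (∀ J ∈ S, ∀ J' ∈ 𝒮, rank J' < rank J → J' ∈ S) →
      |y S - (∏ J ∈ S, δ J) * y ∅| ≤ #S * η from
    hinitial 𝒮 Subset.rfl fun _ _ _ hJ' _ => hJ'
  intro S
  induction S using Finset.induction_on_max_value rank with
  | empty => simp
  | insert J S hJS hmax ih =>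
    intro hS hinit
    obtain ⟨hJ, hS⟩ := insert_subset_iff.1 hS
    have hlow : ∀ J' ∈ 𝒮, rank J' < rank J → J' ∈ S := fun J' hJ' hlt =>
      mem_of_mem_insert_of_ne (hinit J (mem_insert_self J S) J' hJ' hlt)
        (by rintro rfl; exact hlt.false)
    have hih := ih hS fun J₁ hJ₁ J' hJ' hlt =>
      mem_of_mem_insert_of_ne (hinit J₁ (mem_insert_of_mem hJ₁) J' hJ' hlt)
        (by rintro rfl; exact (hmax J₁ hJ₁).not_gt hlt)
    rw [prod_insert hJS, card_insert_of_notMem hJS]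
    calc |y (insert J S) - δ J * (∏ J' ∈ S, δ J') * y ∅|
        = |(y (insert J S) - δ J * y S) + δ J * (y S - (∏ J' ∈ S, δ J') * y ∅)| := by
          congr 1
          ring
      _ ≤ η + |y S - (∏ J' ∈ S, δ J') * y ∅| := by
          refine (abs_add_le _ _).trans (add_le_add (hstep S hS J hJ hJS hmax hlow) ?_)
          rw [abs_mul, abs_of_nonneg (hδ₀ J hJ)]
          exact mul_le_of_le_one_left (abs_nonneg _) (hδ₁ J hJ)
      _ ≤ ((#S + 1 : ℕ) : ℝ) * η := by
          push_cast
          linarith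

end Averaging

section Matching

variable {V : Type*} [DecidableEq V] {F : LabFam V} {H : Finset (Finset V)} {W : Type*}
  [Fintype W] {Fg : Finset (Finset W)} {x : Addr} {σ : W → ℕ}
  {S : Finset (Finset W)} {I J : Finset W} {e e₀ : W → V} {k l i : ℕ} {a : ℕ → ℕ} {d : Addr → ℝ}
  {ε δ : ℝ}

/-- The condition that `e` imposes on the index set `J`: at level `k` the image of `J` is an edge of
`H` exactly if `J` is an edge of `Fg`, and below level `k` the image of `J` has the label that the
address `x` prescribes for the class indices `σ '' J`. -/
def MatchesOn (F : LabFam V) (H : Finset (Finset V)) (k : ℕ) (Fg : Finset (Finset W)) (x : Addr)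
    (σ : W → ℕ) (J : Finset W) (e : W → V) : Prop :=
  if #J = k then (J.image e ∈ H ↔ J ∈ Fg) else F.lbl #J (J.image e) = x.2 (J.image σ)

/-- The index sets on which `MatchesOn` has to be imposed; singletons are accounted for by the
definition of placements. -/
def matchSets (W : Type*) [Fintype W] (k : ℕ) : Finset (Finset W) :=
  {J | 2 ≤ #J ∧ #J ≤ k}

/-- The address `x` and the map `σ` form an index of the sum defining `IC`, that is, `σ` is a
bijection from `W` onto the base of the address `x`. -/
structure AddrMatch (l k : ℕ) (a : ℕ → ℕ) (x : Addr) (σ : W → ℕ) : Prop where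
  isAddress : IsAddress l (k - 1) a x
  injective : Function.Injective σ
  fst_eq : x.1 = univ.image σ

lemma mem_matchSets : J ∈ matchSets W k ↔ 2 ≤ #J ∧ #J ≤ k := by
  simp only [matchSets, mem_filter_univ]

lemma filter_card_matchSets {j : ℕ} (hj : j ∈ Icc 2 k) :
    {J ∈ matchSets W k | #J = j} = powersetCard j univ := by
  rw [mem_Icc] at hj
  ext J
  simp only [mem_filter, mem_matchSets, mem_powersetCard, subset_univ, true_and]
  omega

lemma AddrMatch.image_subset_fst (hx : AddrMatch l k a x σ) (J : Finset W) : J.image σ ⊆ x.1 :=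
  hx.fst_eq ▸ image_subset_image (subset_univ J)

lemma AddrMatch.card_image (hx : AddrMatch l k a x σ) (J : Finset W) : #(J.image σ) = #J :=
  card_image_of_injective J hx.injective

lemma AddrMatch.isAddress_restrictA (hx : AddrMatch l k a x σ) (hJ : #J = k) :
    IsAddress k (k - 1) a (restrictA x (k - 1) (J.image σ)) :=
  HypReg.isAddress_restrictA hx.isAddress (hx.image_subset_fst J) ((hx.card_image J).trans hJ)

variable [DecidableEq W]

/-- The proportion of placements expected to satisfy `MatchesOn` on the index set `J`. -/
noncomputable def matchDensity (k : ℕ) (a : ℕ → ℕ) (d : Addr → ℝ) (Fg : Finset (Finset W))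
    (x : Addr) (σ : W → ℕ) (J : Finset W) : ℝ :=
  if #J = k then
    if J ∈ Fg then d (restrictA x (k - 1) (J.image σ)) else 1 - d (restrictA x (k - 1) (J.image σ))
  else 1 / (a #J : ℝ)

/-- The placements that match on every index set in `S`. -/
noncomputable def matchingPlacements (F : LabFam V) (H : Finset (Finset V)) (k : ℕ)
    (Fg : Finset (Finset W)) (x : Addr) (σ : W → ℕ) (S : Finset (Finset W)) : Finset (W → V) :=
  {e ∈ placements F σ | ∀ J ∈ S, MatchesOn F H k Fg x σ J e}

lemma mem_matchingPlacements : e ∈ matchingPlacements F H k Fg x σ S ↔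
    e ∈ placements F σ ∧ ∀ J ∈ S, MatchesOn F H k Fg x σ J e :=
  mem_filter

lemma matchingPlacements_empty : matchingPlacements F H k Fg x σ ∅ = placements F σ := by
  ext e
  simp only [mem_matchingPlacements, notMem_empty, false_imp_iff, implies_true, and_true]

lemma matchingPlacements_insert : matchingPlacements F H k Fg x σ (insert J S) =
    {e ∈ matchingPlacements F H k Fg x σ S | MatchesOn F H k Fg x σ J e} := by
  ext e
  simp only [mem_filter, mem_matchingPlacements, forall_mem_insert]
  tauto

/-- If `J` is at least as large as every member of `S`, then the conditions on `S` see only proper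
subsets of `J`. -/
lemma mem_matchingPlacements_of_forall_exists (hJ : #J = i + 1) (hJS : J ∉ S)
    (hmax : ∀ J' ∈ S, #J' ≤ #J) (he : e ∈ placements F σ) (hoff : ∀ v ∉ J, e v = e₀ v)
    (hI : ∀ I ⊆ J, #I = i → ∃ e' ∈ {e ∈ matchingPlacements F H k Fg x σ S | ∀ v ∉ J, e v = e₀ v},
      ∀ v ∈ I, e' v = e v) :
    e ∈ matchingPlacements F H k Fg x σ S := by
  refine mem_matchingPlacements.2 ⟨he, fun J' hJ' => ?_⟩
  have hne : J' ∩ J ≠ J := fun hinter =>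
    hJS (eq_of_subset_of_card_le (inter_eq_right.1 hinter) (hmax J' hJ') ▸ hJ')
  have hlt := card_lt_card (inter_subset_right.ssubset_of_ne hne)
  obtain ⟨I, hinter, hIJ, hIc⟩ := exists_subsuperset_card_eq (n := i)
    (inter_subset_right (s₁ := J') (s₂ := J)) (by omega) (by omega)
  obtain ⟨e', he', hIe⟩ := hI I hIJ hIc
  obtain ⟨he'S, he'off⟩ := mem_filter.1 he'
  have himage : J'.image e' = J'.image e := image_congr fun v hv => by
    by_cases hvJ : v ∈ J
    · exact hIe v (hinter (mem_inter.2 ⟨hv, hvJ⟩))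
    · rw [hoff v hvJ, he'off v hvJ]
  have hmatch := (mem_matchingPlacements.1 he'S).2 J' hJ'
  rwa [MatchesOn, himage] at hmatch

lemma addrOf_image_eq_restrictA_iff (hσ : Function.Injective σ) (he : e ∈ placements F σ) :
    F.addrOf i (I.image e) = restrictA x i (I.image σ) ↔
      ∀ M ⊆ I, 2 ≤ #M → #M ≤ i → F.lbl #M (M.image e) = x.2 (M.image σ) := by
  have heinj := injective_of_mem_placements hσ he
  have hinj : Set.InjOn F.vIdx (I.image e) := by
    rw [← card_image_iff, image_vIdx_image he, card_image_of_injective _ hσ,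
      card_image_of_injective _ heinj]
  rw [← image_vIdx_image he, addrOf_eq_restrictA_iff hinj]
  refine ⟨fun h M hM h2 hMi => ?_, fun h M' hM' h2 hMi => ?_⟩
  · have := h (M.image e) (image_subset_image hM)
    rw [card_image_of_injective _ heinj, image_vIdx_image he] at this
    exact this h2 hMi
  · obtain ⟨M, hM, rfl⟩ := subset_image_iff.1 hM'
    rw [card_image_of_injective _ heinj] at h2 hMi ⊢
    rw [image_vIdx_image he]
    exact h M hM h2 hMi

lemma addrOf_image_of_mem_matchingPlacements (hσ : Function.Injective σ) (hik : i < k)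
    (he : e ∈ matchingPlacements F H k Fg x σ S) (hI : ∀ M ⊆ I, 2 ≤ #M → #M ≤ i → M ∈ S) :
    F.addrOf i (I.image e) = restrictA x i (I.image σ) := by
  obtain ⟨hplace, hmatch⟩ := mem_matchingPlacements.1 he
  refine (addrOf_image_eq_restrictA_iff hσ hplace).2 fun M hM h2 hMi => ?_
  have hM := hmatch M (hI M hM h2 hMi)
  rwa [MatchesOn, if_neg (by omega)] at hM

lemma LabFam.IsLabeled.abs_card_filter_matchingPlacements_sub_le (h : F.IsLabeled k a)
    (hσ : Function.Injective σ) (hi : 1 ≤ i) (hJ : #J = i + 1) (hJS : J ∉ S)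
    (hmax : ∀ J' ∈ S, #J' ≤ #J) (hε : 0 ≤ ε) (hδ₀ : 0 ≤ δ) (hδ₁ : δ ≤ 1) {P : (W → V) → Prop}
    (hreg : ∀ e₀ ∈ matchingPlacements F H k Fg x σ S, ∃ A B,
      RegPairC F.gnd (F.toPartFam.cross (i + 1)) i ε δ A B ∧
      ∀ e ∈ matchingPlacements F H k Fg x σ S,
        (P e ↔ J.image e ∈ A) ∧ ∀ I ⊆ J, #I = i → I.image e ∈ B) :
    |(#{e ∈ matchingPlacements F H k Fg x σ S | P e} : ℝ) -
        δ * #(matchingPlacements F H k Fg x σ S)| ≤ ε * (#F.gnd : ℝ) ^ Fintype.card W := by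
  have hsub : matchingPlacements F H k Fg x σ S ⊆ placements F σ := filter_subset _ _
  refine abs_card_filter_sub_le_of_fiber (J := J) (fun e he => Fintype.mem_piFinset.2 fun v =>
    (mem_placements.1 (hsub he) v).1) hε fun e₀ he₀ => ?_
  obtain ⟨A, B, hAB, hmem⟩ := hreg e₀ he₀
  set G := {e ∈ matchingPlacements F H k Fg x σ S | ∀ v ∉ J, e v = e₀ v}
  have hGS : G ⊆ matchingPlacements F H k Fg x σ S := filter_subset _ _
  rw [filter_congr fun e he => (hmem e (hGS he)).1]
  exact h.abs_card_filter_image_mem_sub_le hσ hi hJ (hsub he₀) (hGS.trans hsub)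
    (fun e he => (mem_filter.1 he).2)
    (fun e he hoff hI => mem_filter.2
      ⟨mem_matchingPlacements_of_forall_exists hJ hJS hmax he hoff hI, hoff⟩)
    hε hδ₀ hδ₁ hAB fun e he => (hmem e (hGS he)).2

lemma abs_card_filter_sub_le_of_iff_not {α : Type*} {E : Finset α} {P Q : α → Prop} {η : ℝ}
    (hPQ : ∀ e, Q e ↔ ¬P e) (hP : |(#{e ∈ E | P e} : ℝ) - δ * #E| ≤ η) :
    |(#{e ∈ E | Q e} : ℝ) - (1 - δ) * #E| ≤ η := by
  rw [← abs_neg]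
  convert hP using 2
  rw [← card_filter_add_card_filter_not (s := E) P, filter_congr fun e _ => hPQ e]
  push_cast
  ring

lemma LabFam.IsLabeled.abs_card_filter_matchesOn_sub_le_of_card_lt (h : F.IsLabeled k a)
    (hpoly : F.toPartFam.PolyadReg k a ε) (hε : 0 ≤ ε) (hx : AddrMatch l k a x σ)
    (hJ : 2 ≤ #J) (hJk : #J < k) (hJS : J ∉ S) (hmax : ∀ J' ∈ S, #J' ≤ #J)
    (hlow : ∀ J' ∈ matchSets W k, #J' < #J → J' ∈ S) :
    |(#{e ∈ matchingPlacements F H k Fg x σ S | MatchesOn F H k Fg x σ J e} : ℝ) -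
        matchDensity k a d Fg x σ J * #(matchingPlacements F H k Fg x σ S)|
      ≤ ε * (#F.gnd : ℝ) ^ Fintype.card W := by
  obtain ⟨i, hi⟩ : ∃ i, #J = i + 1 := Nat.exists_eq_add_one.2 (by omega)
  have hplace : ∀ e ∈ matchingPlacements F H k Fg x σ S, e ∈ placements F σ :=
    fun e he => (mem_matchingPlacements.1 he).1
  have hcross : ∀ e ∈ matchingPlacements F H k Fg x σ S,
      J.image e ∈ F.toPartFam.cross (i + 1) :=
    fun e he => hi ▸ h.image_mem_cross hx.injective (hplace e he) J
  have haddr : ∀ e ∈ matchingPlacements F H k Fg x σ S,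
      F.addrOf i (J.image e) = restrictA x i (J.image σ) := fun e he =>
    addrOf_image_of_mem_matchingPlacements hx.injective (by omega) he fun M _ hM hMi =>
      hlow M (mem_matchSets.2 ⟨hM, by omega⟩) (by omega)
  have hlbl := hx.isAddress.2.2.1 (J.image σ) (hx.image_subset_fst J)
  rw [hx.card_image, hi] at hlbl
  obtain ⟨hb, hba⟩ := hlbl (by omega) (by omega)
  rw [matchDensity, if_neg hJk.ne, hi]
  refine h.abs_card_filter_matchingPlacements_sub_le hx.injective (by omega) hi hJS hmax hε
    (by positivity) (one_div (a (i + 1) : ℝ) ▸ Nat.cast_inv_le_one _) fun e₀ he₀ => ?_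
  obtain ⟨A, hreg, hA⟩ :=
    h.exists_regPairC_polyad hpoly (by omega) (by omega) (hcross e₀ he₀) hb hba
  refine ⟨A, _, hreg, fun e he => ?_⟩
  have haddr₀ := (haddr e he).trans (haddr e₀ he₀).symm
  refine ⟨?_, fun I hI hIc => ?_⟩
  · rw [MatchesOn, if_neg hJk.ne, hi, hA _ (hcross e he) haddr₀]
  · rw [← h.polyad_eq_of_addrOf_eq (by omega) (by omega) (hcross e he) (hcross e₀ he₀) haddr₀]
    exact h.mem_polyad_of_subset (by omega) (by omega) (hcross e he) (image_subset_image hI)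
      (hIc ▸ card_image_of_injective I (injective_of_mem_placements hx.injective (hplace e he)))

lemma LabFam.IsLabeled.abs_card_filter_matchesOn_sub_le_of_card_eq (h : F.IsLabeled k a)
    (hdens : F.IsDensPartition k a ε d H) (hd : DensityFun k a d) (hε : 0 ≤ ε)
    (hx : AddrMatch l k a x σ) (hk : 2 ≤ k) (hJk : #J = k) (hJS : J ∉ S)
    (hmax : ∀ J' ∈ S, #J' ≤ #J) (hlow : ∀ J' ∈ matchSets W k, #J' < #J → J' ∈ S) :
    |(#{e ∈ matchingPlacements F H k Fg x σ S | MatchesOn F H k Fg x σ J e} : ℝ) -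
        matchDensity k a d Fg x σ J * #(matchingPlacements F H k Fg x σ S)|
      ≤ ε * (#F.gnd : ℝ) ^ Fintype.card W := by
  obtain ⟨i, rfl⟩ : ∃ i, k = i + 1 := Nat.exists_eq_add_one.2 (by omega)
  have hJaddr := hx.isAddress_restrictA hJk
  obtain ⟨hd₀, hd₁⟩ := hd _ hJaddr
  have hpolyAt : ∀ e ∈ matchingPlacements F H (i + 1) Fg x σ S, ∀ I ⊆ J, #I = i →
      I.image e ∈ F.polyAt i (restrictA x i (J.image σ)) := fun e he I hI hIc => by
    have hplace := (mem_matchingPlacements.1 he).1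
    have hIx : (I.image e).image F.vIdx ⊆ J.image σ :=
      image_vIdx_image hplace I ▸ image_subset_image hI
    refine h.mem_polyAt (hIc ▸ h.image_mem_cross hx.injective hplace I) hIx (by omega) ?_
    rw [restrictA_restrictA x le_rfl hIx, image_vIdx_image hplace]
    exact addrOf_image_of_mem_matchingPlacements hx.injective (by omega) he fun M _ hM hMi =>
      hlow M (mem_matchSets.2 ⟨hM, by omega⟩) (by omega)
  have hedge : ∀ P : (W → V) → Prop, (∀ e, P e ↔ J.image e ∈ H) →
      |(#{e ∈ matchingPlacements F H (i + 1) Fg x σ S | P e} : ℝ) -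
          d (restrictA x i (J.image σ)) * #(matchingPlacements F H (i + 1) Fg x σ S)|
        ≤ ε * (#F.gnd : ℝ) ^ Fintype.card W := fun P hP =>
    h.abs_card_filter_matchingPlacements_sub_le hx.injective (by omega) hJk hJS hmax hε hd₀ hd₁
      fun _ _ => ⟨H, _, hdens _ hJaddr, fun e he => ⟨hP e, hpolyAt e he⟩⟩
  rw [matchDensity, if_pos hJk]
  split_ifs with hF
  · exact hedge _ fun e => by simp only [MatchesOn, hJk, hF, if_true, iff_true]
  · refine abs_card_filter_sub_le_of_iff_not (fun e => ?_) (hedge _ fun _ => Iff.rfl)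
    simp only [MatchesOn, hJk, hF, if_true, iff_false]

lemma AddrMatch.matchDensity_mem_Icc (hx : AddrMatch l k a x σ) (hd : DensityFun k a d) :
    matchDensity k a d Fg x σ J ∈ Set.Icc 0 1 := by
  unfold matchDensity
  split_ifs with hJ hF
  · exact hd _ (hx.isAddress_restrictA hJ)
  · obtain ⟨h₀, h₁⟩ := hd _ (hx.isAddress_restrictA hJ)
    exact ⟨by linarith, by linarith⟩
  · exact ⟨by positivity, one_div (a #J : ℝ) ▸ Nat.cast_inv_le_one _⟩

lemma abs_card_matchingPlacements_sub_prod_le (hP : F.IsEquitPartition k a ε d H)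
    (hd : DensityFun k a d) (hε : 0 ≤ ε) (hx : AddrMatch l k a x σ) :
    |(#(matchingPlacements F H k Fg x σ (matchSets W k)) : ℝ) -
        (∏ J ∈ matchSets W k, matchDensity k a d Fg x σ J) * #(placements F σ)|
      ≤ 2 ^ Fintype.card W * (ε * (#F.gnd : ℝ) ^ Fintype.card W) := by
  obtain ⟨h, ⟨-, -, hpoly⟩, hdens⟩ := hP
  have hcard : (#(matchSets W k) : ℝ) ≤ 2 ^ Fintype.card W := by
    exact_mod_cast (card_le_univ _).trans_eq (Fintype.card_finset (α := W))
  have hcount := abs_sub_prod_mul_le_of_insert (𝒮 := matchSets W k)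
    (y := fun S => #(matchingPlacements F H k Fg x σ S)) (δ := matchDensity k a d Fg x σ)
    (η := ε * (#F.gnd : ℝ) ^ Fintype.card W) card
    (fun J _ => (hx.matchDensity_mem_Icc hd).1) (fun J _ => (hx.matchDensity_mem_Icc hd).2)
    fun S _ J hJ hJS hmax hlow => by
      obtain ⟨hJ2, hJk⟩ := mem_matchSets.1 hJ
      rw [matchingPlacements_insert]
      obtain hlt | heq := hJk.lt_or_eq
      · exact h.abs_card_filter_matchesOn_sub_le_of_card_lt hpoly hε hx hJ2 hlt hJS hmax hlow
      · exact h.abs_card_filter_matchesOn_sub_le_of_card_eq hdens hd hε hx (heq ▸ hJ2) heq hJS hmax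
          hlow
  rw [matchingPlacements_empty] at hcount
  exact hcount.trans (mul_le_mul_of_nonneg_right hcard (by positivity))

end Matching

section PredictedCount

variable {W : Type} [Fintype W] {Fg : Finset (Finset W)} {x : Addr} {σ : W → ℕ} {k l : ℕ}
  {a : ℕ → ℕ} {d : Addr → ℝ}

lemma AddrMatch.prod_matchDensity_powersetCard [DecidableEq W] (hx : AddrMatch l k a x σ) :
    ∏ J ∈ powersetCard k univ, matchDensity k a d Fg x σ J =
      ∏ B ∈ x.1.powersetCard k, if ∃ A ∈ Fg, A.image σ = B then d (restrictA x (k - 1) B)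
        else 1 - d (restrictA x (k - 1) B) := by
  rw [hx.fst_eq]
  have himage : (univ.image σ).powersetCard k = (powersetCard k univ).image (image σ) := by
    ext B
    simp only [mem_powersetCard, mem_image, subset_univ, true_and]
    constructor
    · rintro ⟨hB, hBc⟩
      obtain ⟨J, -, rfl⟩ := subset_image_iff.1 hB
      exact ⟨J, (hx.card_image J).symm.trans hBc, rfl⟩
    · rintro ⟨J, hJ, rfl⟩
      exact ⟨image_subset_image (subset_univ J), (hx.card_image J).trans hJ⟩
  rw [himage, prod_image (image_injective hx.injective).injOn]
  refine prod_congr rfl fun J hJ => ?_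
  have hF : (∃ A ∈ Fg, A.image σ = J.image σ) ↔ J ∈ Fg := by
    simp only [(image_injective hx.injective).eq_iff, exists_eq_right]
  rw [matchDensity, if_pos (mem_powersetCard.1 hJ).2]
  exact if_congr hF.symm rfl rfl

lemma AddrMatch.prod_matchDensity [DecidableEq W] (hx : AddrMatch l k a x σ) (hk : 2 ≤ k)
    (hl : Fintype.card W = l) :
    ∏ J ∈ matchSets W k, matchDensity k a d Fg x σ J = ICs Fg k l a d x σ := by
  have hIcc : Icc 2 k = insert k (Icc 2 (k - 1)) := by
    ext j
    simp only [mem_Icc, mem_insert]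
    omega
  rw [← prod_fiberwise_of_maps_to fun J hJ => mem_Icc.2 (mem_matchSets.1 hJ), hIcc,
    prod_insert (by simp only [mem_Icc]; omega), filter_card_matchSets (mem_Icc.2 ⟨hk, le_rfl⟩),
    hx.prod_matchDensity_powersetCard, ICs]
  congr 1
  refine prod_congr rfl fun j hj => ?_
  rw [mem_Icc] at hj
  rw [filter_card_matchSets (mem_Icc.2 ⟨hj.1, by omega⟩), ← hl, ← card_univ,
    ← card_powersetCard, ← inv_pow]
  refine prod_eq_pow_card fun J hJ => ?_
  have hJc := (mem_powersetCard.1 hJ).2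
  rw [matchDensity, if_neg (by omega), hJc, one_div]

lemma AddrMatch.ICs_mem_Icc (hx : AddrMatch l k a x σ) (hk : 2 ≤ k) (hl : Fintype.card W = l)
    (hd : DensityFun k a d) : ICs Fg k l a d x σ ∈ Set.Icc 0 1 := by
  rw [← hx.prod_matchDensity hk hl]
  exact ⟨prod_nonneg fun J _ => (hx.matchDensity_mem_Icc hd).1,
    prod_le_one (fun J _ => (hx.matchDensity_mem_Icc hd).1)
      fun J _ => (hx.matchDensity_mem_Icc hd).2⟩

end PredictedCount

section InducedMaps

lemma exists_equiv_comp_eq {V W : Type*} {e e₀ : W → V} (he : Function.Injective e)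
    (he₀ : Function.Injective e₀) (hrange : Set.range e = Set.range e₀) :
    ∃ π : W ≃ W, e₀ ∘ π = e := by
  refine ⟨(Equiv.ofInjective e he).trans
    ((Equiv.setCongr hrange).trans (Equiv.ofInjective e₀ he₀).symm), funext fun w => ?_⟩
  exact Equiv.apply_ofInjective_symm he₀ _

lemma autCount_pos {W : Type} [Finite W] [DecidableEq W] (Fg : Finset (Finset W)) :
    0 < AutCount Fg := by
  have : Nonempty {π : W ≃ W // ∀ A : Finset W, A.image π ∈ Fg ↔ A ∈ Fg} :=
    ⟨Equiv.refl W, fun A => by rw [Equiv.coe_refl, image_id]⟩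
  exact Nat.card_pos

variable {V : Type*} [DecidableEq V] {W : Type} [Fintype W] [DecidableEq W] {U S : Finset V}
  {H : Finset (Finset V)} {Fg : Finset (Finset W)} {e : W → V} {k l : ℕ}

/-- The maps from `W` to `U` that embed `Fg` into `H` as an induced subgraph. -/
noncomputable def inducedMaps (U : Finset V) (H : Finset (Finset V)) (k : ℕ)
    (Fg : Finset (Finset W)) : Finset (W → V) :=
  {e ∈ Fintype.piFinset fun _ : W => U |
    Function.Injective e ∧ ∀ A : Finset W, #A = k → (A.image e ∈ H ↔ A ∈ Fg)}

lemma mem_inducedMaps : e ∈ inducedMaps U H k Fg ↔ (∀ w, e w ∈ U) ∧ Function.Injective e ∧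
    ∀ A : Finset W, #A = k → (A.image e ∈ H ↔ A ∈ Fg) := by
  rw [inducedMaps, mem_filter, Fintype.mem_piFinset]

lemma comp_equiv_mem_inducedMaps_iff (hFg : ∀ A ∈ Fg, #A = k) (he : e ∈ inducedMaps U H k Fg)
    (π : W ≃ W) :
    e ∘ π ∈ inducedMaps U H k Fg ↔ ∀ A : Finset W, A.image π ∈ Fg ↔ A ∈ Fg := by
  obtain ⟨heU, heinj, heH⟩ := mem_inducedMaps.1 he
  have hcard : ∀ A : Finset W, #(A.image π) = #A := fun A => card_image_of_injective A π.injective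
  have hedge : ∀ A : Finset W, #A = k → (A.image (e ∘ π) ∈ H ↔ A.image π ∈ Fg) := fun A hA => by
    rw [← image_image, heH _ ((hcard A).trans hA)]
  rw [mem_inducedMaps]
  refine ⟨fun ⟨_, _, hπ⟩ A => ?_, fun hπ =>
    ⟨fun w => heU _, heinj.comp π.injective, fun A hA => (hedge A hA).trans (hπ A)⟩⟩
  by_cases hA : #A = k
  · exact (hedge A hA).symm.trans (hπ A hA)
  · exact iff_of_false (fun h => hA (hcard A ▸ hFg _ h)) fun h => hA (hFg _ h)

lemma card_filter_image_eq_autCount (hFg : ∀ A ∈ Fg, #A = k) (hS : S ⊆ U)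
    (hcopy : InducedCopy Fg H k S) :
    #{e ∈ inducedMaps U H k Fg | univ.image e = S} = AutCount Fg := by
  obtain ⟨e₀, he₀, rfl, hind⟩ := hcopy
  have he₀U : e₀ ∈ inducedMaps U H k Fg :=
    mem_inducedMaps.2 ⟨fun w => hS (mem_image_of_mem e₀ (mem_univ w)), he₀, hind⟩
  rw [AutCount, Nat.card_eq_fintype_card, Fintype.card_subtype]
  symm
  refine card_bij (fun π _ => e₀ ∘ π) (fun π hπ => ?_)
    (fun π _ π' _ h => Equiv.ext fun w => he₀ (congrFun h w)) fun e he => ?_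
  · refine mem_filter.2 ⟨(comp_equiv_mem_inducedMaps_iff hFg he₀U π).2 (mem_filter.1 hπ).2, ?_⟩
    rw [← image_image, image_univ_of_surjective π.surjective]
  · obtain ⟨he, himage⟩ := mem_filter.1 he
    obtain ⟨π, rfl⟩ := exists_equiv_comp_eq (mem_inducedMaps.1 he).2.1 he₀
      (by simpa only [coe_image, coe_univ, Set.image_univ] using congrArg SetLike.coe himage)
    exact ⟨π, mem_filter.2 ⟨mem_univ π, (comp_equiv_mem_inducedMaps_iff hFg he₀U π).1 he⟩, rfl⟩

lemma card_inducedMaps (U : Finset V) (H : Finset (Finset V)) (hFg : ∀ A ∈ Fg, #A = k)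
    (hl : Fintype.card W = l) :
    #(inducedMaps U H k Fg) = #{S ∈ U.powersetCard l | InducedCopy Fg H k S} * AutCount Fg := by
  have hmaps : Set.MapsTo (fun e : W → V => univ.image e) (inducedMaps U H k Fg)
      ({S ∈ U.powersetCard l | InducedCopy Fg H k S} : Finset (Finset V)) := fun e he => by
    obtain ⟨heU, hinj, hind⟩ := mem_inducedMaps.1 (mem_coe.1 he)
    refine mem_coe.2 (mem_filter.2 ⟨mem_powersetCard.2
      ⟨image_subset_iff.2 fun w _ => heU w, ?_⟩, e, hinj, rfl, hind⟩)
    rw [card_image_of_injective _ hinj, card_univ, hl]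
  rw [card_eq_sum_card_fiberwise hmaps]
  refine sum_const_nat fun S hS => ?_
  obtain ⟨hS, hcopy⟩ := mem_filter.1 hS
  exact card_filter_image_eq_autCount hFg (mem_powersetCard.1 hS).1 hcopy

end InducedMaps

section NonInjective

variable {V W ι : Type*} [Fintype W] [DecidableEq W] [DecidableEq ι] {U : Finset V}
  {f : V → ι} {m : ℕ}

lemma card_filter_apply_eq_mul_le (hm : ∀ i, #{v ∈ U | f v = i} ≤ m) {u w : W} (huw : u ≠ w) :
    #{e ∈ Fintype.piFinset fun _ : W => U | f (e u) = f (e w)} * #U ≤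
      m * #U ^ Fintype.card W := by
  have hfiber := card_le_mul_card_image_of_maps_to
    (s := {e ∈ Fintype.piFinset fun _ : W => U | f (e u) = f (e w)})
    (t := Fintype.piFinset fun _ : {v // v ≠ u} => U) (f := fun e (v : {v // v ≠ u}) => e v)
    (fun e he => Fintype.mem_piFinset.2 fun v => Fintype.mem_piFinset.1 (mem_filter.1 he).1 v) m
    fun b _ => (card_le_card_of_injOn (fun e => e u) (fun e he => ?_)
      fun e he e' he' heu => ?_).trans (hm (f (b ⟨w, huw.symm⟩)))
  · rw [Fintype.card_piFinset, prod_const, card_univ, Fintype.card_subtype_compl,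
      Fintype.card_subtype_eq] at hfiber
    refine (Nat.mul_le_mul_right #U hfiber).trans_eq ?_
    rw [mul_assoc, pow_sub_one_mul (Fintype.card_pos_iff.2 ⟨u⟩).ne']
  · obtain ⟨hmem, rfl⟩ := mem_filter.1 (mem_coe.1 he)
    obtain ⟨heU, hfe⟩ := mem_filter.1 hmem
    exact mem_coe.2 (mem_filter.2 ⟨Fintype.mem_piFinset.1 heU u, hfe⟩)
  · have hb := (mem_filter.1 (mem_coe.1 he)).2.trans (mem_filter.1 (mem_coe.1 he')).2.symm
    funext v
    by_cases hv : v = u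
    · exact hv ▸ heu
    · exact congrFun hb ⟨v, hv⟩

lemma card_filter_not_injective_comp_mul_le (hm : ∀ i, #{v ∈ U | f v = i} ≤ m) :
    #{e ∈ Fintype.piFinset fun _ : W => U | ¬Function.Injective (f ∘ e)} * #U ≤
      Fintype.card W ^ 2 * (m * #U ^ Fintype.card W) := by
  have hcover : {e ∈ Fintype.piFinset fun _ : W => U | ¬Function.Injective (f ∘ e)} ⊆
      (univ : Finset W).offDiag.biUnion fun p =>
        {e ∈ Fintype.piFinset fun _ : W => U | f (e p.1) = f (e p.2)} := fun e he => by
    obtain ⟨he, hne⟩ := mem_filter.1 he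
    obtain ⟨u, w, hfuw, huw⟩ := Function.not_injective_iff.1 hne
    exact mem_biUnion.2 ⟨(u, w), mem_offDiag.2 ⟨mem_univ u, mem_univ w, huw⟩,
      mem_filter.2 ⟨he, hfuw⟩⟩
  have hpairs : #(univ : Finset W).offDiag ≤ Fintype.card W ^ 2 := by
    rw [offDiag_card, card_univ, sq]
    exact Nat.sub_le _ _
  calc #{e ∈ Fintype.piFinset fun _ : W => U | ¬Function.Injective (f ∘ e)} * #U
      ≤ (∑ p ∈ (univ : Finset W).offDiag,
          #{e ∈ Fintype.piFinset fun _ : W => U | f (e p.1) = f (e p.2)}) * #U :=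
        Nat.mul_le_mul_right _ ((card_le_card hcover).trans card_biUnion_le)
    _ ≤ #(univ : Finset W).offDiag * (m * #U ^ Fintype.card W) := by
        rw [sum_mul, ← smul_eq_mul (a := #(univ : Finset W).offDiag)]
        exact sum_le_card_nsmul _ _ _ fun p hp =>
          card_filter_apply_eq_mul_le hm (mem_offDiag.1 hp).2.2
    _ ≤ Fintype.card W ^ 2 * (m * #U ^ Fintype.card W) := Nat.mul_le_mul_right _ hpairs

end NonInjective

section AddrPairs

variable {V : Type*} [DecidableEq V] {F : LabFam V} {H : Finset (Finset V)} {W : Type}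
  [Fintype W] {Fg : Finset (Finset W)} {x : Addr} {σ : W → ℕ} {e : W → V}
  {k l t : ℕ} {a : ℕ → ℕ}

lemma mapsTo_setOf_addrMatch [DecidableEq W] (ha : BoundedVec k t a) :
    Set.MapsTo (fun p : Addr × (W → ℕ) => (p.2, fun J : Finset W => p.1.2 (J.image p.2)))
      {p | AddrMatch l k a p.1 p.2}
      ((Fintype.piFinset fun _ : W => range (a 1 + 1)) ×ˢ
        (Fintype.piFinset fun _ : Finset W => range (t + 1)) : Finset _) := by
  rintro ⟨x, σ⟩ hx
  obtain ⟨-, hx₁, hx₂, hx₀⟩ := hx.isAddress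
  simp only [coe_product, Set.mem_prod, mem_coe, Fintype.mem_piFinset, mem_range, Nat.lt_succ_iff]
  refine ⟨fun w => (hx₁ _ (hx.fst_eq ▸ mem_image_of_mem σ (mem_univ w))).2, fun J => ?_⟩
  by_cases hJ : J.image σ ⊆ x.1 ∧ 2 ≤ #(J.image σ) ∧ #(J.image σ) ≤ k - 1
  · exact (hx₂ _ hJ.1 hJ.2.1 hJ.2.2).2.trans (ha _ (by omega) hJ.2.2)
  · exact (hx₀ _ hJ).trans_le (Nat.zero_le t)

lemma injOn_setOf_addrMatch :
    Set.InjOn (fun p : Addr × (W → ℕ) => (p.2, fun J : Finset W => p.1.2 (J.image p.2)))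
      {p | AddrMatch l k a p.1 p.2} := by
  rintro ⟨x, σ⟩ (hx : AddrMatch l k a x σ) ⟨y, τ⟩ (hy : AddrMatch l k a y τ) hxy
  obtain ⟨rfl, hlbl⟩ := Prod.mk.inj hxy
  have hfst := hx.fst_eq.trans hy.fst_eq.symm
  refine Prod.ext (Prod.ext hfst (funext fun L => ?_)) rfl
  by_cases hL : L ⊆ x.1
  · obtain ⟨J, -, rfl⟩ := subset_image_iff.1 (hx.fst_eq ▸ hL)
    exact congrFun hlbl J
  · rw [hx.isAddress.2.2.2 L fun h => hL h.1, hy.isAddress.2.2.2 L fun h => hL (hfst ▸ h.1)]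

lemma finite_setOf_addrMatch (W : Type) [Fintype W] (l k : ℕ) (a : ℕ → ℕ) :
    {p : Addr × (W → ℕ) | AddrMatch l k a p.1 p.2}.Finite :=
  Set.Finite.of_injOn (mapsTo_setOf_addrMatch (t := maxA k a) fun _ hi hik =>
    le_sup (mem_Icc.2 ⟨hi, hik⟩)) injOn_setOf_addrMatch (finite_toSet _)

/-- The pairs `(x, σ)` that index the sum defining `IC`. -/
noncomputable def addrPairs (W : Type) [Fintype W] (l k : ℕ) (a : ℕ → ℕ) :
    Finset (Addr × (W → ℕ)) :=
  (finite_setOf_addrMatch W l k a).toFinset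

lemma mem_addrPairs {p : Addr × (W → ℕ)} : p ∈ addrPairs W l k a ↔ AddrMatch l k a p.1 p.2 :=
  Set.Finite.mem_toFinset _

lemma card_addrPairs_le (ha : BoundedVec k t a) (ha₁ : a 1 ≤ t) :
    #(addrPairs W l k a) ≤ (t + 1) ^ (Fintype.card W + 2 ^ Fintype.card W) := by
  have hcoe : (addrPairs W l k a : Set (Addr × (W → ℕ))) = {p | AddrMatch l k a p.1 p.2} :=
    Set.Finite.coe_toFinset _
  refine (card_le_card_of_injOn _ (hcoe ▸ mapsTo_setOf_addrMatch ha)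
    (hcoe ▸ injOn_setOf_addrMatch)).trans ?_
  rw [card_product, Fintype.card_piFinset, Fintype.card_piFinset, prod_const, prod_const,
    card_range, card_range, card_univ, card_univ, Fintype.card_finset, pow_add]
  exact Nat.mul_le_mul_right _ (Nat.pow_le_pow_left (by omega) _)

lemma finsum_mem_finsum_mem_eq_sum {α β M : Type*} [AddCommMonoid M] {P : Finset (α × β)}
    {A : Set α} {B : α → Set β} (hP : ∀ x y, (x, y) ∈ P ↔ x ∈ A ∧ y ∈ B x) (f : α → β → M) :
    ∑ᶠ x ∈ A, ∑ᶠ y ∈ B x, f x y = ∑ p ∈ P, f p.1 p.2 := by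
  rw [← finsum_mem_finset_eq_sum, finsum_curry]
  · refine finsum_congr fun x => ?_
    by_cases hx : x ∈ A <;> simp [hP, hx]
  · refine P.finite_toSet.subset (Function.support_subset_iff'.2 fun p hp => ?_)
    simp only [mem_coe.not.1 hp, finsum_false]

lemma bijOn_univ_iff {A : Finset ℕ} :
    Set.BijOn σ Set.univ A ↔ Function.Injective σ ∧ A = univ.image σ := by
  rw [← coe_inj, coe_image, coe_univ]
  exact ⟨fun h => ⟨Set.injOn_univ.1 h.injOn, h.image_eq.symm⟩,
    fun ⟨hσ, hA⟩ => hA ▸ hσ.injOn.bijOn_image⟩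

lemma IC_eq_sum [DecidableEq W] (Fg : Finset (Finset W)) (k l : ℕ) (a : ℕ → ℕ) (d : Addr → ℝ) :
    IC Fg k l a d = ((a 1).choose l : ℝ)⁻¹ * ((AutCount Fg : ℝ)⁻¹ *
      ∑ p ∈ addrPairs W l k a, ICs Fg k l a d p.1 p.2) := by
  have hpairs : ∀ (x : Addr) (σ : W → ℕ), (x, σ) ∈ addrPairs W l k a ↔
      x ∈ {x : Addr | IsAddress l (k - 1) a x} ∧ σ ∈ {σ : W → ℕ | Set.BijOn σ Set.univ ↑x.1} :=
    fun x σ => by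
      simp only [mem_addrPairs, Set.mem_ofPred_eq, bijOn_univ_iff]
      exact ⟨fun h => ⟨h.1, h.2, h.3⟩, fun h => ⟨h.1, h.2.1, h.2.2⟩⟩
  rw [IC, ← finsum_mem_finsum_mem_eq_sum hpairs fun x σ => ICs Fg k l a d x σ,
    ← smul_eq_mul (a := (AutCount Fg : ℝ)⁻¹)]
  simp only [ICa, ← smul_eq_mul (a := (AutCount Fg : ℝ)⁻¹), smul_finsum]

lemma forall_mem_matchSets_matchesOn_iff (hk : 2 ≤ k) :
    (∀ J ∈ matchSets W k, MatchesOn F H k Fg x σ J e) ↔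
      (∀ J : Finset W, #J = k → (J.image e ∈ H ↔ J ∈ Fg)) ∧
        ∀ J : Finset W, 2 ≤ #J → #J ≤ k - 1 → F.lbl #J (J.image e) = x.2 (J.image σ) := by
  constructor
  · refine fun h => ⟨fun J hJ => ?_, fun J hJ hJk => ?_⟩
    · have := h J (mem_matchSets.2 (by omega))
      rwa [MatchesOn, if_pos hJ] at this
    · have := h J (mem_matchSets.2 (by omega))
      rwa [MatchesOn, if_neg (by omega)] at this
  · rintro ⟨hedge, hlbl⟩ J hJ
    rw [mem_matchSets] at hJ
    unfold MatchesOn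
    split_ifs with hJk
    · exact hedge J hJk
    · exact hlbl J hJ.1 (by omega)

lemma AddrMatch.mem_matchingPlacements_iff [DecidableEq W] (hx : AddrMatch l k a x σ) (hk : 2 ≤ k) :
    e ∈ matchingPlacements F H k Fg x σ (matchSets W k) ↔
      (e ∈ inducedMaps F.gnd H k Fg ∧ Function.Injective (F.vIdx ∘ e)) ∧
        (F.addrOf (k - 1) (univ.image e), F.vIdx ∘ e) = (x, σ) := by
  have haddr : e ∈ placements F σ → (F.addrOf (k - 1) (univ.image e) = x ↔
      ∀ J : Finset W, 2 ≤ #J → #J ≤ k - 1 → F.lbl #J (J.image e) = x.2 (J.image σ)) :=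
    fun he => by
      have hiff := addrOf_image_eq_restrictA_iff (x := x) (i := k - 1) (I := univ) hx.injective he
      rw [← hx.fst_eq, hx.isAddress.restrictA_fst] at hiff
      exact hiff.trans ⟨fun h J => h J (subset_univ J), fun h J _ => h J⟩
  rw [mem_matchingPlacements, forall_mem_matchSets_matchesOn_iff hk, Prod.mk.injEq]
  constructor
  · rintro ⟨he, hedge, hlbl⟩
    have hσ : F.vIdx ∘ e = σ := funext fun w => (mem_placements.1 he w).2
    exact ⟨⟨mem_inducedMaps.2 ⟨fun w => (mem_placements.1 he w).1,
      injective_of_mem_placements hx.injective he, hedge⟩, hσ ▸ hx.injective⟩,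
      (haddr he).2 hlbl, hσ⟩
  · rintro ⟨⟨he, -⟩, hxe, rfl⟩
    obtain ⟨hg, -, hedge⟩ := mem_inducedMaps.1 he
    have hplace : e ∈ placements F (F.vIdx ∘ e) := mem_placements.2 fun w => ⟨hg w, rfl⟩
    exact ⟨hplace, hedge, (haddr hplace).1 hxe⟩

lemma LabFam.IsLabeled.addrMatch_addrOf (h : F.IsLabeled k a) (he : ∀ w, e w ∈ F.gnd)
    (hinj : Function.Injective (F.vIdx ∘ e)) :
    AddrMatch (Fintype.card W) k a (F.addrOf (k - 1) (univ.image e)) (F.vIdx ∘ e) where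
  isAddress := h.isAddress_addrOf <| card_univ (α := W) ▸
    h.image_mem_cross hinj (mem_placements.2 fun w => ⟨he w, rfl⟩) univ
  injective := hinj
  fst_eq := image_image

lemma LabFam.IsLabeled.card_filter_injective_inducedMaps [DecidableEq W] (h : F.IsLabeled k a)
    (hk : 2 ≤ k) :
    #{e ∈ inducedMaps F.gnd H k Fg | Function.Injective (F.vIdx ∘ e)} =
      ∑ p ∈ addrPairs W (Fintype.card W) k a,
        #(matchingPlacements F H k Fg p.1 p.2 (matchSets W k)) := by
  rw [card_eq_sum_card_fiberwise (f := fun e => (F.addrOf (k - 1) (univ.image e), F.vIdx ∘ e))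
    (t := addrPairs W (Fintype.card W) k a) fun e he => ?_]
  · refine sum_congr rfl fun p hp => congrArg card ?_
    ext e
    rw [(mem_addrPairs.1 hp).mem_matchingPlacements_iff hk, mem_filter, mem_filter]
  · obtain ⟨he, hinj⟩ := mem_filter.1 (mem_coe.1 he)
    exact mem_coe.2 (mem_addrPairs.2 (h.addrMatch_addrOf (mem_inducedMaps.1 he).1 hinj))

end AddrPairs

section Estimates

lemma norm_prod_sub_prod_le {ι R : Type*} [NormedCommRing R] [NormOneClass R] (s : Finset ι)
    {p q : ι → R} (hp : ∀ i ∈ s, ‖p i‖ ≤ 1) (hq : ∀ i ∈ s, ‖q i‖ ≤ 1) :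
    ‖∏ i ∈ s, p i - ∏ i ∈ s, q i‖ ≤ ∑ i ∈ s, ‖p i - q i‖ := by
  induction s using Finset.cons_induction with
  | empty => simp
  | cons i s his ih =>
    rw [forall_mem_cons] at hp hq
    have hprod : ‖∏ j ∈ s, q j‖ ≤ 1 :=
      (norm_prod_le s q).trans (prod_le_one (fun _ _ => norm_nonneg _) hq.2)
    rw [prod_cons, prod_cons, sum_cons]
    calc ‖p i * ∏ j ∈ s, p j - q i * ∏ j ∈ s, q j‖
        = ‖(p i - q i) * ∏ j ∈ s, q j + p i * (∏ j ∈ s, p j - ∏ j ∈ s, q j)‖ := by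
          congr 1
          ring
      _ ≤ ‖p i - q i‖ * ‖∏ j ∈ s, q j‖ + ‖p i‖ * ‖∏ j ∈ s, p j - ∏ j ∈ s, q j‖ :=
          (norm_add_le _ _).trans (add_le_add (norm_mul_le _ _) (norm_mul_le _ _))
      _ ≤ ‖p i - q i‖ * 1 + 1 * ∑ j ∈ s, ‖p j - q j‖ := by
          gcongr
          · exact hp.1
          · exact ih hp.2 hq.2
      _ = ‖p i - q i‖ + ∑ j ∈ s, ‖p j - q j‖ := by rw [mul_one, one_mul]

lemma tendsto_pow_div_choose (l : ℕ) :
    Filter.Tendsto (fun n : ℕ => (n : ℝ) ^ l / n.choose l) Filter.atTop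
      (nhds (l.factorial : ℝ)) := by
  have hne : ∀ᶠ n : ℕ in Filter.atTop, (n.choose l : ℝ) ≠ 0 := by
    filter_upwards [Filter.eventually_ge_atTop l] with n hn
    exact_mod_cast (Nat.choose_pos hn).ne'
  have hone := (Asymptotics.isEquivalent_iff_tendsto_one hne).1 (isEquivalent_choose l).symm
  rw [← mul_one (l.factorial : ℝ)]
  refine (hone.const_mul _).congr fun n => ?_
  rw [Pi.div_apply, div_right_comm, mul_div_cancel₀ _ (Nat.cast_ne_zero.2 l.factorial_ne_zero)]

lemma eventually_abs_pow_div_choose_sub_le (l : ℕ) (C : ℝ) {κ δ : ℝ} (hκ : 0 < κ) (hδ : 0 < δ) :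
    ∀ᶠ n : ℕ in Filter.atTop, 0 < n ∧ |(n : ℝ) ^ l / n.choose l - l.factorial| ≤ κ ∧ C / n ≤ δ := by
  filter_upwards [Filter.eventually_gt_atTop 0,
    (tendsto_pow_div_choose l).eventually (Metric.closedBall_mem_nhds _ hκ),
    (tendsto_const_div_atTop_nhds_zero_nat C).eventually_le_const hδ] with n hn hchoose hC
  exact ⟨hn, hchoose, hC⟩

variable {V : Type*} [DecidableEq V] {F : LabFam V} {H : Finset (Finset V)} {W : Type}
  [Fintype W] {Fg : Finset (Finset W)} {x : Addr} {σ : W → ℕ} {k b t : ℕ} {a : ℕ → ℕ}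
  {d : Addr → ℝ} {ε κ η L : ℝ}

lemma LabFam.IsEquitPartition.card_class_eq_or_eq (hP : F.IsEquitPartition k a ε d H)
    (hb : 1 ≤ b) (hba : b ≤ a 1) :
    #{u ∈ F.gnd | F.vIdx u = b} = #F.gnd / a 1 ∨
      #{u ∈ F.gnd | F.vIdx u = b} = #F.gnd / a 1 + 1 := by
  obtain ⟨h, ⟨-, hcard, -⟩, -⟩ := hP
  obtain ⟨v, hv, rfl⟩ := h.exists_vIdx_eq hb hba
  have hclass := h.sup_vClass (singleton_subset_iff.2 hv)
  simp only [sup_singleton, image_singleton, mem_singleton] at hclass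
  exact hclass ▸ hcard v hv

lemma LabFam.IsEquitPartition.card_class_le (hP : F.IsEquitPartition k a ε d H) (b : ℕ) :
    #{u ∈ F.gnd | F.vIdx u = b} ≤ #F.gnd / a 1 + 1 := by
  obtain hb | ⟨v, hv⟩ := {u ∈ F.gnd | F.vIdx u = b}.eq_empty_or_nonempty
  · exact (card_eq_zero.2 hb).trans_le (Nat.zero_le _)
  · obtain ⟨hvg, rfl⟩ := mem_filter.1 hv
    have := hP.card_class_eq_or_eq (hP.1.2.1 v hvg).1 (hP.1.2.1 v hvg).2
    omega

lemma LabFam.IsEquitPartition.abs_card_class_sub_le (hP : F.IsEquitPartition k a ε d H)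
    (hb : 1 ≤ b) (hba : b ≤ a 1) :
    |(#{u ∈ F.gnd | F.vIdx u = b} : ℝ) - #F.gnd / a 1| ≤ 1 := by
  have hfloor : ((#F.gnd / a 1 : ℕ) : ℝ) ≤ #F.gnd / a 1 := Nat.cast_div_le
  have hlt : (#F.gnd : ℝ) / a 1 < (#F.gnd / a 1 : ℕ) + 1 := by
    rw [div_lt_iff₀ (by exact_mod_cast hb.trans hba), mul_comm]
    exact_mod_cast Nat.lt_mul_div_succ #F.gnd (hb.trans hba)
  rw [abs_le]
  obtain h | h := hP.card_class_eq_or_eq hb hba <;> rw [h] <;> push_cast <;>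
    constructor <;> linarith

lemma LabFam.IsEquitPartition.abs_card_placements_sub_le [DecidableEq W]
    (hP : F.IsEquitPartition k a ε d H) (hσ : ∀ w, 1 ≤ σ w ∧ σ w ≤ a 1) (hn : 0 < #F.gnd) :
    |(#(placements F σ) : ℝ) / #F.gnd ^ Fintype.card W - 1 / a 1 ^ Fintype.card W| ≤
      Fintype.card W / #F.gnd := by
  have hn' : (0 : ℝ) < #F.gnd := by exact_mod_cast hn
  have hplace : (#(placements F σ) : ℝ) / #F.gnd ^ Fintype.card W =
      ∏ w : W, (#{u ∈ F.gnd | F.vIdx u = σ w} : ℝ) / #F.gnd := by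
    rw [placements, Fintype.card_piFinset, prod_div_distrib, prod_const, card_univ, Nat.cast_prod]
  have hpow : 1 / (a 1 : ℝ) ^ Fintype.card W = ∏ _w : W, (a 1 : ℝ)⁻¹ := by
    rw [prod_const, card_univ, inv_pow, one_div]
  rw [hplace, hpow, ← Real.norm_eq_abs]
  refine (norm_prod_sub_prod_le _ (fun w _ => ?_) fun w _ => ?_).trans
    ((sum_le_card_nsmul _ _ (1 / (#F.gnd : ℝ)) fun w _ => ?_).trans_eq ?_)
  · rw [Real.norm_of_nonneg (by positivity), div_le_one hn']
    exact_mod_cast card_filter_le _ _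
  · rw [Real.norm_of_nonneg (by positivity)]
    exact Nat.cast_inv_le_one _
  · have hsub : (#{u ∈ F.gnd | F.vIdx u = σ w} : ℝ) / #F.gnd - (a 1 : ℝ)⁻¹ =
        (#{u ∈ F.gnd | F.vIdx u = σ w} - #F.gnd / a 1 : ℝ) / #F.gnd := by
      rw [sub_div, div_div_cancel_left' hn'.ne']
    rw [hsub, norm_div, Real.norm_of_nonneg hn'.le]
    exact div_le_div_of_nonneg_right (hP.abs_card_class_sub_le (hσ w).1 (hσ w).2) hn'.le
  · rw [card_univ, nsmul_eq_mul, mul_one_div]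

variable [DecidableEq W]

lemma LabFam.IsEquitPartition.abs_card_matchingPlacements_div_sub_le
    (hP : F.IsEquitPartition k a ε d H) (hk : 2 ≤ k) (hd : DensityFun k a d) (hε : 0 ≤ ε)
    (hn : 0 < #F.gnd) (hx : AddrMatch (Fintype.card W) k a x σ) :
    |(#(matchingPlacements F H k Fg x σ (matchSets W k)) : ℝ) / #F.gnd ^ Fintype.card W -
        ICs Fg k (Fintype.card W) a d x σ / a 1 ^ Fintype.card W| ≤
      2 ^ Fintype.card W * ε + Fintype.card W / #F.gnd := by
  have hcount := abs_card_matchingPlacements_sub_prod_le (Fg := Fg) hP hd hε hx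
  rw [hx.prod_matchDensity hk rfl] at hcount
  have hplace := hP.abs_card_placements_sub_le (σ := σ)
    (fun w => hx.isAddress.2.1 _ (hx.fst_eq ▸ mem_image_of_mem σ (mem_univ w))) hn
  obtain ⟨hI₀, hI₁⟩ := hx.ICs_mem_Icc (Fg := Fg) hk rfl hd
  have hpow : (0 : ℝ) < (#F.gnd : ℝ) ^ Fintype.card W := by
    exact_mod_cast pow_pos hn _
  generalize ICs Fg k (Fintype.card W) a d x σ = I at hcount hI₀ hI₁ ⊢
  refine (abs_sub_le _ (I * (#(placements F σ) / (#F.gnd : ℝ) ^ Fintype.card W)) _).trans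
    (add_le_add ?_ ?_)
  · rw [← mul_div_assoc, ← sub_div, abs_div, abs_of_pos hpow, div_le_iff₀ hpow, mul_assoc]
    exact hcount
  · rw [← mul_one_div I (_ ^ _), ← mul_sub, abs_mul, abs_of_nonneg hI₀]
    exact (mul_le_of_le_one_left (abs_nonneg _) hI₁).trans hplace

lemma LabFam.IsEquitPartition.abs_card_filter_injective_inducedMaps_div_sub_le
    (hP : F.IsEquitPartition k a ε d H) (hk : 2 ≤ k) (hd : DensityFun k a d) (hε : 0 ≤ ε)
    (hn : 0 < #F.gnd) (Fg : Finset (Finset W)) :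
    |(#{e ∈ inducedMaps F.gnd H k Fg | Function.Injective (F.vIdx ∘ e)} : ℝ) /
          #F.gnd ^ Fintype.card W -
        (∑ p ∈ addrPairs W (Fintype.card W) k a, ICs Fg k (Fintype.card W) a d p.1 p.2) /
          a 1 ^ Fintype.card W| ≤
      #(addrPairs W (Fintype.card W) k a) *
        (2 ^ Fintype.card W * ε + Fintype.card W / #F.gnd) := by
  rw [hP.1.card_filter_injective_inducedMaps hk, Nat.cast_sum, sum_div, sum_div,
    ← sum_sub_distrib, ← nsmul_eq_mul]
  exact (abs_sum_le_sum_abs _ _).trans (sum_le_card_nsmul _ _ _ fun p hp =>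
    hP.abs_card_matchingPlacements_div_sub_le hk hd hε hn (mem_addrPairs.1 hp))

lemma LabFam.IsEquitPartition.card_filter_not_injective_inducedMaps_div_le
    (hP : F.IsEquitPartition k a ε d H) (hn : 0 < #F.gnd) (Fg : Finset (Finset W)) :
    (#{e ∈ inducedMaps F.gnd H k Fg | ¬Function.Injective (F.vIdx ∘ e)} : ℝ) /
        #F.gnd ^ Fintype.card W ≤ Fintype.card W ^ 2 * (1 / a 1 + 1 / #F.gnd) := by
  have hn' : (0 : ℝ) < #F.gnd := by exact_mod_cast hn
  have hcount : #{e ∈ inducedMaps F.gnd H k Fg | ¬Function.Injective (F.vIdx ∘ e)} * #F.gnd ≤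
      Fintype.card W ^ 2 * ((#F.gnd / a 1 + 1) * #F.gnd ^ Fintype.card W) :=
    (Nat.mul_le_mul_right _ (card_le_card (filter_subset_filter _ (filter_subset _ _)))).trans
      (card_filter_not_injective_comp_mul_le hP.card_class_le)
  rw [div_le_iff₀ (by positivity), ← mul_le_mul_iff_left₀ hn']
  calc (#{e ∈ inducedMaps F.gnd H k Fg | ¬Function.Injective (F.vIdx ∘ e)} : ℝ) * #F.gnd
      ≤ Fintype.card W ^ 2 * (((#F.gnd / a 1 : ℕ) + 1) * #F.gnd ^ Fintype.card W) := by
        exact_mod_cast hcount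
    _ ≤ Fintype.card W ^ 2 * ((#F.gnd / a 1 + 1) * #F.gnd ^ Fintype.card W) := by
        gcongr
        exact Nat.cast_div_le
    _ = Fintype.card W ^ 2 * (1 / a 1 + 1 / #F.gnd) * #F.gnd ^ Fintype.card W * #F.gnd := by
        field_simp

lemma LabFam.IsEquitPartition.abs_card_inducedMaps_div_sub_le
    (hP : F.IsEquitPartition k a ε d H) (hk : 2 ≤ k) (hd : DensityFun k a d) (hε : 0 ≤ ε)
    (hn : 0 < #F.gnd) (Fg : Finset (Finset W)) :
    |(#(inducedMaps F.gnd H k Fg) : ℝ) / #F.gnd ^ Fintype.card W -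
        (∑ p ∈ addrPairs W (Fintype.card W) k a, ICs Fg k (Fintype.card W) a d p.1 p.2) /
          a 1 ^ Fintype.card W| ≤
      Fintype.card W ^ 2 * (1 / a 1 + 1 / #F.gnd) + #(addrPairs W (Fintype.card W) k a) *
        (2 ^ Fintype.card W * ε + Fintype.card W / #F.gnd) := by
  have hinj := hP.abs_card_filter_injective_inducedMaps_div_sub_le hk hd hε hn Fg
  have hnot := hP.card_filter_not_injective_inducedMaps_div_le hn Fg
  rw [← card_filter_add_card_filter_not (s := inducedMaps F.gnd H k Fg)
    fun e => Function.Injective (F.vIdx ∘ e), Nat.cast_add, add_comm, add_div, add_sub_assoc]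
  refine (abs_add_le _ _).trans (add_le_add ?_ hinj)
  rwa [abs_of_nonneg (by positivity)]

lemma abs_mul_sub_mul_le {φ M r s : ℝ} (hφ₀ : 0 ≤ φ) (hφ₁ : φ ≤ 1) (hL : 0 ≤ L)
    (hr : |r - L| ≤ κ) (hs : |s - L| ≤ κ) (hφM : |φ - M| ≤ η) :
    |φ * r - M * s| ≤ 2 * κ + (L + κ) * η := by
  have hrs : |r - s| ≤ 2 * κ := by
    rw [abs_le] at hr hs ⊢
    constructor <;> linarith
  have hs' : |s| ≤ L + κ := by
    rw [abs_le] at hs ⊢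
    constructor <;> linarith
  calc |φ * r - M * s| = |φ * (r - s) + s * (φ - M)| := by ring_nf
    _ ≤ |φ| * |r - s| + |s| * |φ - M| := by
        rw [← abs_mul, ← abs_mul]
        exact abs_add_le _ _
    _ ≤ 1 * (2 * κ) + (L + κ) * η := by
        gcongr
        · rwa [abs_of_nonneg hφ₀]
        · exact (abs_nonneg s).trans hs'
    _ = 2 * κ + (L + κ) * η := by rw [one_mul]

lemma card_inducedMaps_le (U : Finset V) (H : Finset (Finset V)) (k : ℕ)
    (Fg : Finset (Finset W)) : #(inducedMaps U H k Fg) ≤ #U ^ Fintype.card W := by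
  refine (card_filter_le _ _).trans_eq ?_
  rw [Fintype.card_piFinset, prod_const, card_univ]

lemma abs_card_inducedCopy_div_sub_IC_le {U : Finset V} (hFg : ∀ A ∈ Fg, #A = k)
    (hn : 0 < #U) (ha₁ : 0 < a 1) (hL : 0 ≤ L)
    (hr : |(#U : ℝ) ^ Fintype.card W / (#U).choose (Fintype.card W) - L| ≤ κ)
    (hs : |(a 1 : ℝ) ^ Fintype.card W / (a 1).choose (Fintype.card W) - L| ≤ κ)
    (hcount : |(#(inducedMaps U H k Fg) : ℝ) / #U ^ Fintype.card W -
      (∑ p ∈ addrPairs W (Fintype.card W) k a, ICs Fg k (Fintype.card W) a d p.1 p.2) /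
        a 1 ^ Fintype.card W| ≤ η) :
    |(#{S ∈ U.powersetCard (Fintype.card W) | InducedCopy Fg H k S} : ℝ) /
        (#U).choose (Fintype.card W) - IC Fg k (Fintype.card W) a d| ≤
      2 * κ + (L + κ) * η := by
  have hn' : (0 : ℝ) < (#U : ℝ) ^ Fintype.card W := by exact_mod_cast pow_pos hn _
  have ha' : (0 : ℝ) < (a 1 : ℝ) ^ Fintype.card W := by exact_mod_cast pow_pos ha₁ _
  have hA : (1 : ℝ) ≤ AutCount Fg := by exact_mod_cast autCount_pos Fg
  have hle : (#(inducedMaps U H k Fg) : ℝ) / #U ^ Fintype.card W ≤ 1 := by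
    rw [div_le_one hn']
    exact_mod_cast card_inducedMaps_le U H k Fg
  have hmul := abs_mul_sub_mul_le (by positivity) hle hL hr hs hcount
  rw [div_mul_div_cancel₀ hn'.ne', div_mul_div_cancel₀ ha'.ne',
    card_inducedMaps U H hFg rfl] at hmul
  rw [IC_eq_sum]
  refine le_trans ?_ ((div_le_self (abs_nonneg _) hA).trans hmul)
  rw [← abs_of_pos (zero_lt_one.trans_le hA), ← abs_div, abs_of_pos (zero_lt_one.trans_le hA)]
  refine (congrArg abs ?_).le
  push_cast
  field_simp

end Estimates

theorem induced_counting_regularity_instance_general {γ : ℝ} (hγ : 0 < γ) {k : ℕ} (hk : 2 ≤ k)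
    (l : ℕ) :
    ∃ T₀ : ℕ, ∀ t : ℕ, ∃ ε₁ : ℝ, 0 < ε₁ ∧ ∃ n₀ : ℕ,
    ∀ ε : ℝ, 0 ≤ ε → ε ≤ ε₁ → ∀ a : ℕ → ℕ, T₀ ≤ a 1 → BoundedVec k t a →
    ∀ d : Addr → ℝ, DensityFun k a d →
    ∀ (V : Type*) [DecidableEq V] (F : LabFam V) (H : Finset (Finset V)), n₀ ≤ #F.gnd →
    F.IsEquitPartition k a ε d H →
    ∀ (W : Type) [Fintype W] [DecidableEq W], Fintype.card W = l →
    ∀ Fg : Finset (Finset W), (∀ e ∈ Fg, #e = k) →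
    |(#{S ∈ F.gnd.powersetCard l | InducedCopy Fg H k S} : ℝ) / (#F.gnd).choose l -
      IC Fg k l a d| ≤ γ := by
  have hγ₃ : 0 < γ / 3 := by positivity
  obtain ⟨δ, hδ, hδγ⟩ := exists_pos_mul_lt hγ₃ (3 * (l.factorial + γ / 3))
  obtain ⟨T₀, hT₀⟩ := Filter.eventually_atTop.1
    (eventually_abs_pow_div_choose_sub_le l ((l : ℝ) ^ 2) hγ₃ hδ)
  refine ⟨T₀, fun t => ?_⟩
  set K : ℝ := (t + 1) ^ (l + 2 ^ l) with hKt
  obtain ⟨ε₁, hε₁, hKε⟩ := exists_pos_mul_lt hδ (K * 2 ^ l)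
  obtain ⟨n₀, hn₀⟩ := Filter.eventually_atTop.1
    (eventually_abs_pow_div_choose_sub_le l ((l : ℝ) ^ 2 + K * l) hγ₃ hδ)
  refine ⟨ε₁, hε₁, n₀, fun ε hε hεε₁ a ha₁ ha d hd V _ F H hn hP W _ _ hl Fg hFg => ?_⟩
  obtain ⟨ha_pos, has, haδ⟩ := hT₀ _ ha₁
  obtain ⟨hn_pos, hnr, hnδ⟩ := hn₀ _ hn
  subst hl
  have hcount := hP.abs_card_inducedMaps_div_sub_le hk hd hε hn_pos Fg
  have hK : (#(addrPairs W (Fintype.card W) k a) : ℝ) ≤ K := by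
    rw [hKt]
    exact_mod_cast card_addrPairs_le (W := W) ha (ha 1 le_rfl (by omega))
  refine (abs_card_inducedCopy_div_sub_IC_le hFg hn_pos ha_pos (Nat.cast_nonneg _) hnr has
    (hcount.trans (?_ : _ ≤ 3 * δ))).trans (by linarith)
  calc _ ≤ (Fintype.card W : ℝ) ^ 2 * (1 / a 1 + 1 / #F.gnd) +
          K * (2 ^ Fintype.card W * ε₁ + Fintype.card W / #F.gnd) := by gcongr
    _ = (Fintype.card W : ℝ) ^ 2 / a 1 + K * 2 ^ Fintype.card W * ε₁ +
          ((Fintype.card W : ℝ) ^ 2 + K * Fintype.card W) / #F.gnd := by ring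
    _ ≤ 3 * δ := by linarith

/-- Induced counting lemma for hypergraphs satisfying a regularity instance: the proportion
of ℓ-subsets inducing a copy of `F` is predicted by the density function. -/
theorem induced_counting_regularity_instance (eRI : ℕ → ℕ → ℝ) (hERI : GoodERI eRI) :
    ∀ (γ : ℝ) (k l : ℕ), 0 < γ → 2 ≤ k → k ≤ l →
    ∃ T₀ : ℕ, ∀ t a1 : ℕ, T₀ ≤ t → T₀ ≤ a1 →
    ∃ ε₁ : ℝ, 0 < ε₁ ∧ ∀ ε : ℝ, 0 < ε → ε ≤ ε₁ →
    ∃ n₀ : ℕ, ∀ n : ℕ, n₀ ≤ n →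
    ∀ a : ℕ → ℕ, a 1 = a1 → (∀ i, 1 ≤ i → i ≤ k - 1 → 1 ≤ a i ∧ a i ≤ t) →
    ∀ d : Addr → ℝ, RegInstance eRI k ε a d →
    ∀ (V : Type) [DecidableEq V], ∀ W : Finset V, W.card = n →
    ∀ H : Finset (Finset V), IsKGraph W k H →
    (∃ P : LabFam V, P.gnd = W ∧ P.IsEquitPartition k a ε d H) →
    ∀ (Wf : Type) [Fintype Wf] [DecidableEq Wf], Fintype.card Wf = l →
    ∀ Fg : Finset (Finset Wf), (∀ e ∈ Fg, e.card = k) →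
    |(((W.powersetCard l).filter fun S => InducedCopy Fg H k S).card : ℝ) /
        (n.choose l : ℝ) - IC Fg k l a d| ≤ γ := by
  intro γ k l hγ hk _
  obtain ⟨T₀, h⟩ := induced_counting_regularity_instance_general hγ hk l
  refine ⟨T₀, fun t a1 _ ha1 => ?_⟩
  obtain ⟨ε₁, hε₁, n₀, h⟩ := h t
  refine ⟨ε₁, hε₁, fun ε hε hεε₁ => ⟨n₀, ?_⟩⟩
  rintro _ hn a rfl ha d hRI V _ _ rfl H - ⟨F, rfl, hP⟩ W _ _ hl Fg hFg
  exact h ε hε.le hεε₁ a ha1 (fun i hi hik => (ha i hi hik).2) d hRI.2.2.2.2 V F H hn hP W hl Fg hFg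

end HypReg
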